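/- arXiv:1711.10661 — 2 statements merged into one kernel-verified Lean document; each statement's English description precedes it below -/
import Mathlib

section
/- Let n, k, ℓ be positive integers with ℓ ≤ k. Suppose Π : {0,1}^{n×k} → ℝ is a finite linear combination Π = Σ_j a_j χ_j of ℓ-cylinder intersections χ_j with real coefficients a_j, such that |Π(X)| ≤ 1 and |GIP_{n,k}(X) − Π(X)| ≤ 1/3 for every X ∈ {0,1}^{n×k}. Then Σ_j |a_j| ≥ (1/3) · (1 − 1/(2^{ℓ−1} · C(k,≤ℓ)))^{−n}, where C(k,≤ℓ) = Σ_{i=0}^{ℓ} C(k,i). -/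
open Finset

/-- `χ` is an `S`-cylinder intersection on `{0,1}^{n×k}`: a product over `j ∈ S` of
`{0,1}`-valued functions `φ j`, where `φ j` does not depend on the `j`-th column. -/
def IsCylinderOn (n k : ℕ) (S : Finset (Fin k))
    (χ : (Fin n → Fin k → Bool) → ℝ) : Prop :=
  ∃ φ : Fin k → ((Fin n → Fin k → Bool) → ℝ),
    (∀ j ∈ S, ∀ X, φ j X = 0 ∨ φ j X = 1) ∧
    (∀ j ∈ S, ∀ X Y, (∀ i, ∀ j', j' ≠ j → X i j' = Y i j') → φ j X = φ j Y) ∧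
    (∀ X, χ X = ∏ j ∈ S, φ j X)

/-- Generalized inner product: `GIP_{n,k}(X) = ⊕_{i=1}^n ∧_{j=1}^k X_{i,j}`, i.e.
the parity of the number of all-ones rows of `X`. -/
def GIP (n k : ℕ) (X : Fin n → Fin k → Bool) : Bool :=
  decide ((Finset.univ.filter (fun i : Fin n => ∀ j, X i j = true)).card % 2 = 1)

/-!
One Cauchy–Schwarz step in the style of Babai–Nisan–Szegedy removes a column of a cylinder
intersection. Keeping the exact constant, the bound `c` for the correlation per row becomes
`√((1 + c) / 2)`, and since the bound with no columns is `-1 = cos π`, the half-angle formula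
shows that on the full cube an `S`-cylinder intersection has correlation at most
`cos (π / 2 ^ |S|) ^ n` with `(-1) ^ GIP`.

Now draw the rows uniformly from the `C` rows with at most `ℓ` zeros. For `|S| = ℓ`, the rows whose
zeros all lie in `S` form a cube of size `2 ^ ℓ`, and resampling every row of this cube within it
reduces to the previous case. Hence every `ℓ`-cylinder intersection has correlation at most
`(1 - 2 ^ ℓ * (1 - cos (π / 2 ^ ℓ)) / C) ^ n`, whereas `GIP` and thus its approximation `Π`
correlate by a constant: pairing `Π = ∑ a j * χ j` with `(-1) ^ GIP` bounds `∑ |a j|` from below.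

For `ℓ ≥ 2` this beats the claimed rate by enough to absorb the bias of `(-1) ^ GIP`. For `ℓ = 1`
it does not, so the functional is augmented by evaluation at a point where `GIP = 1`; its values on
cylinders do not grow, because `1 - χ` is a cylinder whenever `χ` is.
-/

section

open scoped BigOperators Real

section UniformExpectation

variable {ι α 𝕜 : Type*} [Fintype ι] [DecidableEq ι] [Semifield 𝕜] [CharZero 𝕜]

theorem expect_piFinset_prod (s : ι → Finset α) (g : ι → α → 𝕜) :
    𝔼 x ∈ Fintype.piFinset s, ∏ i, g i (x i) = ∏ i, 𝔼 a ∈ s i, g i a := by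
  simp only [expect_eq_sum_div_card, Fintype.card_piFinset, prod_div_distrib, prod_univ_sum,
    Nat.cast_prod]

variable [Fintype α]

theorem expect_prod_apply (g : ι → α → 𝕜) : 𝔼 x : ι → α, ∏ i, g i (x i) = ∏ i, 𝔼 a, g i a := by
  rw [← expect_piFinset_prod, Fintype.piFinset_univ]

theorem expect_apply_eq_expect [Nonempty α] (i : ι) (g : α → 𝕜) :
    𝔼 x : ι → α, g (x i) = 𝔼 a, g a := by
  calc 𝔼 x : ι → α, g (x i)
      = 𝔼 x : ι → α, ∏ i', if i' = i then g (x i') else 1 := by simp only [Fintype.prod_ite_eq']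
    _ = ∏ i', 𝔼 a, if i' = i then g a else 1 :=
        expect_prod_apply fun i' a => if i' = i then g a else 1
    _ = ∏ i', if i' = i then 𝔼 a, g a else 1 :=
        prod_congr rfl fun i' _ => by split_ifs <;> simp only [Fintype.expect_const]
    _ = 𝔼 a, g a := by rw [Fintype.prod_ite_eq']

end UniformExpectation

section Sign

variable {ι κ : Type*}

/-- The sign `(-1)^∧` of the conjunction of the entries of the row `r` in the columns `S`. -/
def rowSign (S : Finset κ) (r : κ → Bool) : ℝ :=
  if ∀ j ∈ S, r j = true then -1 else 1

theorem rowSign_congr {S T : Finset κ} {r q : κ → Bool}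
    (h : (∀ j ∈ S, r j = true) ↔ ∀ j ∈ T, q j = true) : rowSign S r = rowSign T q :=
  if_congr h rfl rfl

/-- The sign `(-1)^GIP` of the submatrix of `X` with rows `A` and columns `S`. -/
def gipSign (A : Finset ι) (S : Finset κ) (X : ι → κ → Bool) : ℝ :=
  ∏ i ∈ A, rowSign S (X i)

theorem gipSign_empty (A : Finset ι) (X : ι → κ → Bool) :
    gipSign A (∅ : Finset κ) X = (-1) ^ #A := by
  simp [gipSign, rowSign]

theorem gipSign_univ (n k : ℕ) (X : Fin n → Fin k → Bool) :
    gipSign univ univ X = if GIP n k X then -1 else 1 := by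
  simp only [gipSign, rowSign, mem_univ, forall_const, prod_ite, prod_const, one_pow, mul_one, GIP,
    decide_eq_true_eq]
  split_ifs with h
  · exact (Nat.odd_iff.2 h).neg_one_pow
  · exact (Nat.even_iff.2 (by lia)).neg_one_pow

end Sign

section Resampling

variable {ι κ : Type*} [DecidableEq κ]

/-- The matrix obtained from `X` by replacing, in each row `i`, the entries in the columns
`N (X i)` by those of `Y`. -/
def resample (N : (κ → Bool) → Finset κ) (X Y : ι → κ → Bool) : ι → κ → Bool :=
  fun i => (N (X i)).piecewise (Y i) (X i)

theorem gipSign_insert_mul_gipSign_insert (A : Finset ι) {S : Finset κ} {j : κ} (hj : j ∉ S)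
    (X Y Z : ι → κ → Bool) :
    gipSign A (insert j S) (resample (fun _ => {j}) X Y) *
        gipSign A (insert j S) (resample (fun _ => {j}) X Z) =
      gipSign (A.filter fun i => Y i j ≠ Z i j) S X := by
  have forall_insert (W : ι → κ → Bool) (i : ι) :
      (∀ j' ∈ insert j S, resample (fun _ => {j}) X W i j' = true) ↔
        W i j = true ∧ ∀ j' ∈ S, X i j' = true := by
    rw [forall_mem_insert]
    refine and_congr (by simp [resample]) (forall₂_congr fun j' hj' => ?_)
    simp [resample, ne_of_mem_of_not_mem hj' hj]
  simp only [gipSign, rowSign, forall_insert, prod_filter, ← prod_mul_distrib]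
  refine prod_congr rfl fun i _ => ?_
  by_cases hS : ∀ j' ∈ S, X i j' = true
  · simp only [eq_true hS, and_true]
    cases Y i j <;> cases Z i j <;> norm_num
  · simp only [eq_false hS, and_false, if_false, mul_one, ite_self]

variable [Fintype ι] [DecidableEq ι] [Fintype κ]

-- Fresh uniform entries have the same law as the old entries flipped along a uniform mask,
-- and flipping along a fixed mask is an involution of the domain.
theorem expect_expect_resample (N : (κ → Bool) → Finset κ) (R : Finset (κ → Bool))
    (hN : ∀ r y, N ((N r).piecewise y r) = N r)
    (hR : ∀ r ∈ R, ∀ y, (N r).piecewise y r ∈ R) (f : (ι → κ → Bool) → ℝ) :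
    𝔼 X ∈ Fintype.piFinset (fun _ => R), 𝔼 Y, f (resample N X Y) =
      𝔼 X ∈ Fintype.piFinset (fun _ => R), f X := by
  let flip (Y X : ι → κ → Bool) : ι → κ → Bool := fun i j => Y i j ^^ X i j
  have flip_flip (Y X) : flip Y (flip Y X) = X := by
    funext i j
    simp only [flip, Bool.bne_self_left]
  have expect_flip (X) : 𝔼 Y, f (resample N X Y) = 𝔼 Y, f (resample N X (flip X Y)) :=
    (Fintype.expect_bijective (flip X) (Function.Involutive.bijective (flip_flip X)) _ _
      fun _ => rfl).symm
  have mem_of_mem (Y X) (hX : X ∈ Fintype.piFinset fun _ : ι => R) :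
      resample N X Y ∈ Fintype.piFinset fun _ : ι => R :=
    Fintype.mem_piFinset.2 fun i => hR _ (Fintype.mem_piFinset.1 hX i) _
  have resample_resample (X Y) :
      resample N (resample N X (flip X Y)) (flip (resample N X (flip X Y)) Y) = X := by
    funext i j
    by_cases hj : j ∈ N (X i) <;> simp [resample, hN, flip, hj]
  simp only [expect_flip]
  rw [expect_comm]
  calc 𝔼 Y, 𝔼 X ∈ Fintype.piFinset (fun _ => R), f (resample N X (flip X Y))
      = 𝔼 _Y : ι → κ → Bool, 𝔼 X ∈ Fintype.piFinset (fun _ => R), f X :=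
        expect_congr rfl fun Y _ => expect_nbij' (fun X => resample N X (flip X Y))
          (fun X => resample N X (flip X Y)) (fun X => mem_of_mem _ X) (fun X => mem_of_mem _ X)
          (fun X _ => resample_resample X Y) (fun X _ => resample_resample X Y) fun _ _ => rfl
    _ = 𝔼 X ∈ Fintype.piFinset (fun _ => R), f X := Fintype.expect_const _

theorem expect_expect_resample_singleton (j : κ) (f : (ι → κ → Bool) → ℝ) :
    𝔼 X, 𝔼 Y, f (resample (fun _ => {j}) X Y) = 𝔼 X, f X := by
  simpa only [Fintype.piFinset_univ] using
    expect_expect_resample (fun _ => {j}) univ (fun _ _ => rfl) (fun _ _ _ => mem_univ _) f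

end Resampling

section BoundedCylinder

variable {ι κ : Type*}

/-- `X` and `Y` agree outside column `j`. -/
def EqOffCol (j : κ) (X Y : ι → κ → Bool) : Prop :=
  ∀ i, ∀ m, m ≠ j → X i m = Y i m

/-- The relaxation of `S`-cylinder intersections in which the factors take values in `[-1, 1]`
instead of `{0, 1}`; unlike the former, it is closed under negation when `S` is nonempty. -/
def IsBoundedCylinder (S : Finset κ) (f : (ι → κ → Bool) → ℝ) : Prop :=
  ∃ φ : κ → (ι → κ → Bool) → ℝ,
    (∀ j ∈ S, ∀ X, |φ j X| ≤ 1) ∧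
    (∀ j ∈ S, ∀ X Y, EqOffCol j X Y → φ j X = φ j Y) ∧
    ∀ X, f X = ∏ j ∈ S, φ j X

namespace IsBoundedCylinder

variable {S : Finset κ} {f g : (ι → κ → Bool) → ℝ}

theorem mul (hf : IsBoundedCylinder S f) (hg : IsBoundedCylinder S g) :
    IsBoundedCylinder S fun X => f X * g X := by
  obtain ⟨φ, φ_le, φ_eq, hφ⟩ := hf
  obtain ⟨ψ, ψ_le, ψ_eq, hψ⟩ := hg
  refine ⟨fun j X => φ j X * ψ j X, fun j hj X => ?_, fun j hj X Y h =>
    congrArg₂ (· * ·) (φ_eq j hj X Y h) (ψ_eq j hj X Y h), fun X => ?_⟩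
  · rw [abs_mul]
    exact mul_le_one₀ (φ_le j hj X) (abs_nonneg _) (ψ_le j hj X)
  · simp only [hφ, hψ, prod_mul_distrib]

theorem comp (hf : IsBoundedCylinder S f) {T : (ι → κ → Bool) → ι → κ → Bool}
    (hT : ∀ j ∈ S, ∀ X Y, EqOffCol j X Y → EqOffCol j (T X) (T Y)) :
    IsBoundedCylinder S fun X => f (T X) := by
  obtain ⟨φ, φ_le, φ_eq, hφ⟩ := hf
  exact ⟨fun j X => φ j (T X), fun j hj X => φ_le j hj _,
    fun j hj X Y h => φ_eq j hj _ _ (hT j hj X Y h), fun X => hφ _⟩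

theorem neg (hf : IsBoundedCylinder S f) (hS : S.Nonempty) :
    IsBoundedCylinder S fun X => -f X := by
  classical
  obtain ⟨j₀, hj₀⟩ := hS
  obtain ⟨φ, φ_le, φ_eq, hφ⟩ := hf
  refine ⟨fun j X => (if j = j₀ then -1 else 1) * φ j X, fun j hj X => ?_,
    fun j hj X Y h => congrArg _ (φ_eq j hj X Y h), fun X => ?_⟩
  · obtain h | h := eq_or_ne j j₀ <;> simpa [h] using φ_le j hj X
  · simp only [hφ, prod_mul_distrib, prod_ite_eq', if_pos hj₀, neg_one_mul]

theorem exists_eq_mul_of_insert [DecidableEq κ] {j : κ} (hj : j ∉ S)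
    (hf : IsBoundedCylinder (insert j S) f) :
    ∃ h g : (ι → κ → Bool) → ℝ, (∀ X, |h X| ≤ 1) ∧ (∀ X Y, EqOffCol j X Y → h X = h Y) ∧
      IsBoundedCylinder S g ∧ ∀ X, f X = g X * h X := by
  obtain ⟨φ, φ_le, φ_eq, hφ⟩ := hf
  refine ⟨φ j, fun X => ∏ j' ∈ S, φ j' X, φ_le j (mem_insert_self j S),
    φ_eq j (mem_insert_self j S), ⟨φ, fun j' hj' => φ_le j' (mem_insert_of_mem hj'),
      fun j' hj' => φ_eq j' (mem_insert_of_mem hj'), fun _ => rfl⟩, fun X => ?_⟩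
  rw [hφ, prod_insert hj, mul_comm]

end IsBoundedCylinder

theorem eqOffCol_resample_singleton [DecidableEq κ] (j : κ) (X Y : ι → κ → Bool) :
    EqOffCol j (resample (fun _ => {j}) X Y) X :=
  fun i _ hj' => piecewise_eq_of_notMem {j} (Y i) (X i) (notMem_singleton.2 hj')

theorem EqOffCol.resample_const [DecidableEq κ] {j : κ} {X X' : ι → κ → Bool}
    (h : EqOffCol j X X') (M : Finset κ) (Y : ι → κ → Bool) :
    EqOffCol j (resample (fun _ => M) X Y) (resample (fun _ => M) X' Y) := by
  intro i j' hj'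
  simp only [resample, piecewise, h i j' hj']

end BoundedCylinder

section CosPiDivTwoPow

theorem cos_pi_div_two_pow_succ_nonneg (s : ℕ) : 0 ≤ Real.cos (π / 2 ^ (s + 1)) :=
  Real.cos_nonneg_of_neg_pi_div_two_le_of_le
    ((neg_nonpos.2 Real.pi_div_two_pos.le).trans (by positivity))
    (div_le_div_of_nonneg_left Real.pi_pos.le two_pos (le_self_pow₀ one_le_two s.succ_ne_zero))

theorem sq_cos_pi_div_two_pow_succ (s : ℕ) :
    Real.cos (π / 2 ^ (s + 1)) ^ 2 = (1 + Real.cos (π / 2 ^ s)) / 2 := by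
  have double_angle : 2 * (π / 2 ^ (s + 1)) = π / 2 ^ s := by
    rw [pow_succ]
    field_simp
  rw [Real.cos_sq, double_angle]
  ring

end CosPiDivTwoPow

section FullCube

variable {ι κ : Type*} [Fintype ι] [Fintype κ] [DecidableEq ι] [DecidableEq κ]

theorem sq_expect_mul_le (j : κ) (f : (ι → κ → Bool) → ℝ) {h : (ι → κ → Bool) → ℝ}
    (h_le : ∀ X, |h X| ≤ 1) (h_eq : ∀ X Y, EqOffCol j X Y → h X = h Y) :
    (𝔼 X, f X * h X) ^ 2 ≤
      𝔼 Y, 𝔼 Z, 𝔼 X, f (resample (fun _ => {j}) X Y) * f (resample (fun _ => {j}) X Z) := by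
  let F (X : ι → κ → Bool) : ℝ := 𝔼 Y, f (resample (fun _ => {j}) X Y)
  have expect_h_sq : 𝔼 X, h X ^ 2 ≤ 1 :=
    expect_le univ_nonempty fun X _ => (sq_le_one_iff_abs_le_one _).2 (h_le X)
  calc (𝔼 X, f X * h X) ^ 2
      = (𝔼 X, F X * h X) ^ 2 := by
        rw [← expect_expect_resample_singleton j]
        simp only [h_eq _ _ (eqOffCol_resample_singleton j _ _), ← expect_mul, F]
    _ ≤ (𝔼 X, F X ^ 2) * 𝔼 X, h X ^ 2 := expect_mul_sq_le_sq_mul_sq _ _ _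
    _ ≤ 𝔼 X, F X ^ 2 :=
        mul_le_of_le_one_right (expect_nonneg fun X _ => sq_nonneg _) expect_h_sq
    _ = _ := by
        simp only [F, sq, expect_mul_expect]
        rw [expect_comm]
        exact expect_congr rfl fun Y _ => expect_comm _ _ _

theorem expect_pow_card_filter_ne (A : Finset ι) (j : κ) (Y : ι → κ → Bool) (c : ℝ) :
    𝔼 Z : ι → κ → Bool, c ^ #(A.filter fun i => Y i j ≠ Z i j) = ((1 + c) / 2) ^ #A := by
  have expect_ite (b : Bool) : 𝔼 b', (if b ≠ b' then c else 1) = (1 + c) / 2 := by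
    cases b <;> simp [Fintype.expect_eq_sum_div_card, Fintype.sum_bool, add_comm,
      -Fintype.univ_bool]
  let factor (i : ι) (r : κ → Bool) : ℝ := if i ∈ A then (if Y i j ≠ r j then c else 1) else 1
  have expect_factor (i : ι) : 𝔼 r, factor i r = if i ∈ A then (1 + c) / 2 else 1 := by
    by_cases hi : i ∈ A
    · simp only [factor, if_pos hi]
      rw [← expect_ite (Y i j)]
      exact expect_apply_eq_expect j fun b => if Y i j ≠ b then c else 1
    · simp only [factor, if_neg hi, Fintype.expect_const]
  calc 𝔼 Z : ι → κ → Bool, c ^ #(A.filter fun i => Y i j ≠ Z i j)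
      = 𝔼 Z : ι → κ → Bool, ∏ i, factor i (Z i) := by
        simp only [factor, prod_ite_mem, univ_inter, prod_ite, prod_const, one_pow, mul_one]
    _ = ∏ i, 𝔼 r, factor i r := expect_prod_apply factor
    _ = ((1 + c) / 2) ^ #A := by
        simp only [expect_factor, prod_ite_mem, univ_inter, prod_const]

-- The induction starts at `-1 = cos π`, and each Cauchy–Schwarz step replaces the bound `c` for
-- a row by `√((1 + c) / 2)`, which is the half-angle formula.
theorem expect_gipSign_mul_le {S : Finset κ} (A : Finset ι) {f : (ι → κ → Bool) → ℝ}
    (hf : IsBoundedCylinder S f) :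
    𝔼 X, gipSign A S X * f X ≤ Real.cos (π / 2 ^ #S) ^ #A := by
  induction S using Finset.induction_on generalizing A f with
  | empty =>
    obtain ⟨φ, -, -, hφ⟩ := hf
    simp [gipSign_empty, hφ]
  | insert j S hj ih =>
    obtain ⟨h, g, h_le, h_eq, hg, hfgh⟩ := hf.exists_eq_mul_of_insert hj
    have g_comp (Y : ι → κ → Bool) :
        IsBoundedCylinder S fun X => g (resample (fun _ => {j}) X Y) :=
      hg.comp fun j' _ X X' hX => hX.resample_const {j} Y
    set c := Real.cos (π / 2 ^ #S)
    rw [card_insert_of_notMem hj]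
    refine le_of_sq_le_sq ?_ (pow_nonneg (cos_pi_div_two_pow_succ_nonneg #S) _)
    calc (𝔼 X, gipSign A (insert j S) X * f X) ^ 2
        = (𝔼 X, gipSign A (insert j S) X * g X * h X) ^ 2 := by simp only [hfgh, mul_assoc]
      _ ≤ _ := sq_expect_mul_le j (fun X => gipSign A (insert j S) X * g X) h_le h_eq
      _ = 𝔼 Y, 𝔼 Z, 𝔼 X, gipSign (A.filter fun i => Y i j ≠ Z i j) S X *
            (g (resample (fun _ => {j}) X Y) * g (resample (fun _ => {j}) X Z)) := by
          refine expect_congr rfl fun Y _ => expect_congr rfl fun Z _ =>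
            expect_congr rfl fun X _ => ?_
          rw [mul_mul_mul_comm, gipSign_insert_mul_gipSign_insert A hj]
      _ ≤ 𝔼 Y : ι → κ → Bool, 𝔼 Z : ι → κ → Bool, c ^ #(A.filter fun i => Y i j ≠ Z i j) :=
          expect_le_expect fun Y _ => expect_le_expect fun Z _ => ih _ ((g_comp Y).mul (g_comp Z))
      _ = (Real.cos (π / 2 ^ (#S + 1)) ^ #A) ^ 2 := by
          simp only [expect_pow_card_filter_ne, Fintype.expect_const]
          rw [pow_right_comm, sq_cos_pi_div_two_pow_succ]

end FullCube

section Subcube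

variable {κ : Type*} [Fintype κ] [DecidableEq κ] {S : Finset κ}

/-- The rows whose zeros all lie in the columns `S`. -/
def subcube (S : Finset κ) : Finset (κ → Bool) :=
  Fintype.piFinset fun j => if j ∈ S then univ else {true}

theorem mem_subcube {r : κ → Bool} : r ∈ subcube S ↔ ∀ j ∉ S, r j = true := by
  refine Fintype.mem_piFinset.trans (forall_congr' fun j => ?_)
  split_ifs with hj <;> simp [hj]

theorem card_subcube : #(subcube S) = 2 ^ #S := by
  simp only [subcube, Fintype.card_piFinset, apply_ite card, card_univ, Fintype.card_bool,
    card_singleton, prod_ite_mem, univ_inter, prod_const]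

theorem subcube_mono {T : Finset κ} (hST : S ⊆ T) : subcube S ⊆ subcube T :=
  fun _ hr => mem_subcube.2 fun j hj => mem_subcube.1 hr j (notMem_mono hST hj)

theorem piecewise_mem_subcube_iff {r : κ → Bool} (y : κ → Bool) :
    S.piecewise y r ∈ subcube S ↔ r ∈ subcube S := by
  simp only [mem_subcube]
  exact forall₂_congr fun j hj => by rw [piecewise_eq_of_notMem _ _ _ hj]

theorem expect_ite_mem_subcube {R : Finset (κ → Bool)} (hR : subcube S ⊆ R) (c : ℝ) :
    𝔼 r ∈ R, (if r ∈ subcube S then c else 1) = 1 - 2 ^ #S * (1 - c) / #R := by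
  have R_pos : (0 : ℝ) < #R :=
    Nat.cast_pos.2 ((card_subcube (S := S) ▸ Nat.two_pow_pos #S).trans_le (card_le_card hR))
  have sum_eq : ∑ r ∈ R, (if r ∈ subcube S then c else 1) = #R - 2 ^ #S * (1 - c) := by
    calc ∑ r ∈ R, (if r ∈ subcube S then c else 1)
        = ∑ r ∈ R, (1 - if r ∈ subcube S then 1 - c else 0) :=
          sum_congr rfl fun r _ => by split_ifs <;> ring
      _ = #R - 2 ^ #S * (1 - c) := by
          rw [sum_sub_distrib, sum_ite_mem, inter_eq_right.2 hR, sum_const, sum_const,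
            card_subcube]
          simp only [nsmul_eq_mul, mul_one, Nat.cast_pow, Nat.cast_ofNat]
  rw [expect_eq_sum_div_card, sum_eq, sub_div, div_self R_pos.ne']

/-- The columns in which the row `r` is resampled: all of `S` if `r` lies in the subcube `S`,
and none otherwise. -/
def freeColumns (S : Finset κ) (r : κ → Bool) : Finset κ :=
  if r ∈ subcube S then S else ∅

theorem freeColumns_of_mem {r : κ → Bool} (hr : r ∈ subcube S) : freeColumns S r = S :=
  if_pos hr

theorem freeColumns_of_notMem {r : κ → Bool} (hr : r ∉ subcube S) : freeColumns S r = ∅ :=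
  if_neg hr

theorem freeColumns_piecewise (r y : κ → Bool) :
    freeColumns S ((freeColumns S r).piecewise y r) = freeColumns S r := by
  by_cases hr : r ∈ subcube S
  · rw [freeColumns_of_mem hr, freeColumns_of_mem ((piecewise_mem_subcube_iff y).2 hr)]
  · rw [freeColumns_of_notMem hr, piecewise_empty, freeColumns_of_notMem hr]

theorem piecewise_freeColumns_mem {R : Finset (κ → Bool)} (hR : subcube S ⊆ R) {r : κ → Bool}
    (hr : r ∈ R) (y : κ → Bool) : (freeColumns S r).piecewise y r ∈ R := by
  by_cases hrS : r ∈ subcube S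
  · rw [freeColumns_of_mem hrS]
    exact hR ((piecewise_mem_subcube_iff y).2 hrS)
  · rwa [freeColumns_of_notMem hrS, piecewise_empty]

theorem rowSign_univ_piecewise {r : κ → Bool} (hr : r ∈ subcube S) (y : κ → Bool) :
    rowSign univ (S.piecewise y r) = rowSign S y := by
  refine rowSign_congr (forall_congr' fun j => ?_)
  by_cases hj : j ∈ S <;> simp [hj, mem_subcube.1 hr]

theorem rowSign_univ_of_notMem_subcube {r : κ → Bool} (hr : r ∉ subcube S) :
    rowSign univ r = 1 :=
  if_neg fun h => hr (mem_subcube.2 fun j _ => h j (mem_univ j))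

theorem gipSign_resample_freeColumns {ι : Type*} [Fintype ι] (S : Finset κ) (X Y : ι → κ → Bool) :
    gipSign univ univ (resample (freeColumns S) X Y) =
      gipSign {i | X i ∈ subcube S} S Y := by
  simp only [gipSign, prod_filter, resample]
  refine prod_congr rfl fun i _ => ?_
  by_cases hi : X i ∈ subcube S
  · rw [if_pos hi, freeColumns_of_mem hi, rowSign_univ_piecewise hi]
  · rw [if_neg hi, freeColumns_of_notMem hi, piecewise_empty, rowSign_univ_of_notMem_subcube hi]

/-- The rows with at most `ℓ` zeros. -/
def nearOnes (κ : Type*) [Fintype κ] [DecidableEq κ] (ℓ : ℕ) : Finset (κ → Bool) :=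
  univ.filter fun r => #{j | r j = false} ≤ ℓ

theorem nearOnes_nonempty (ℓ : ℕ) : (nearOnes κ ℓ).Nonempty :=
  ⟨fun _ => true, by simp [nearOnes]⟩

theorem subcube_subset_nearOnes {ℓ : ℕ} (hS : #S ≤ ℓ) : subcube S ⊆ nearOnes κ ℓ := by
  intro r hr
  refine mem_filter.2 ⟨mem_univ r, (card_le_card fun j hj => ?_).trans hS⟩
  by_contra hjS
  exact absurd (mem_filter.1 hj).2 (by simp [mem_subcube.1 hr j hjS])

theorem card_nearOnes (ℓ : ℕ) :
    #(nearOnes κ ℓ) = ∑ i ∈ range (ℓ + 1), (Fintype.card κ).choose i := by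
  have card_fiber (i : ℕ) (hi : i ∈ range (ℓ + 1)) :
      #{r ∈ nearOnes κ ℓ | #{j | r j = false} = i} = (Fintype.card κ).choose i := by
    rw [← card_univ, ← card_powersetCard]
    refine card_nbij' (fun r => univ.filter fun j => r j = false) (fun T j => !decide (j ∈ T))
      ?_ ?_ ?_ ?_
    · intro r hr
      exact mem_coe.2 (mem_powersetCard.2 ⟨subset_univ _, (mem_filter.1 hr).2⟩)
    · intro T hT
      have := (mem_powersetCard.1 hT).2
      simp_all [nearOnes]
    · intro r _
      simp
    · intro T _
      simp
  rw [← sum_congr rfl card_fiber]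
  exact card_eq_sum_card_fiberwise fun r hr =>
    mem_coe.2 (mem_range_succ_iff.2 (mem_filter.1 hr).2)

theorem two_pow_le_card_nearOnes {ℓ : ℕ} (hℓ : ℓ ≤ Fintype.card κ) : 2 ^ ℓ ≤ #(nearOnes κ ℓ) := by
  obtain ⟨S, -, hS⟩ := exists_subset_card_eq (card_univ (α := κ) ▸ hℓ)
  calc 2 ^ ℓ = #(subcube S) := by rw [card_subcube, hS]
    _ ≤ #(nearOnes κ ℓ) := card_le_card (subcube_subset_nearOnes hS.le)

end Subcube

section Correlation

variable {ι κ : Type*} [Fintype ι] [DecidableEq ι] [Fintype κ] {R : Finset (κ → Bool)}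

/-- The correlation of `f` with `(-1)^GIP` over a uniform matrix whose rows lie in `R`. -/
noncomputable def gipCorr (R : Finset (κ → Bool)) (f : (ι → κ → Bool) → ℝ) : ℝ :=
  𝔼 X ∈ Fintype.piFinset (fun _ => R), gipSign univ univ X * f X

theorem gipCorr_neg (f : (ι → κ → Bool) → ℝ) : gipCorr R (fun X => -f X) = -gipCorr R f := by
  simp only [gipCorr, mul_neg, expect_neg_distrib]

theorem gipCorr_sub (f g : (ι → κ → Bool) → ℝ) :
    gipCorr R (fun X => f X - g X) = gipCorr R f - gipCorr R g := by
  simp only [gipCorr, mul_sub, expect_sub_distrib]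

theorem gipCorr_sum_mul {α : Type*} (J : Finset α) (a : α → ℝ) (χ : α → (ι → κ → Bool) → ℝ) :
    gipCorr R (fun X => ∑ j ∈ J, a j * χ j X) = ∑ j ∈ J, a j * gipCorr R (χ j) := by
  simp only [gipCorr, mul_sum, expect_sum_comm, mul_expect, mul_left_comm]

variable [DecidableEq κ]

theorem gipCorr_one (hR : subcube ∅ ⊆ R) :
    gipCorr R (fun _ : ι → κ → Bool => 1) = (1 - 2 / #R) ^ Fintype.card ι := by
  have rowSign_eq (r : κ → Bool) : rowSign univ r = if r ∈ subcube ∅ then -1 else 1 := by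
    simp [rowSign, mem_subcube]
  simp only [gipCorr, gipSign, mul_one]
  rw [expect_piFinset_prod (fun _ => R) fun _ => rowSign univ, prod_const, card_univ]
  simp only [rowSign_eq, expect_ite_mem_subcube hR, card_empty]
  norm_num

theorem gipCorr_le {S : Finset κ} {f : (ι → κ → Bool) → ℝ} (hf : IsBoundedCylinder S f)
    (hR : subcube S ⊆ R) :
    gipCorr R f ≤ (1 - 2 ^ #S * (1 - Real.cos (π / 2 ^ #S)) / #R) ^ Fintype.card ι := by
  have f_comp (X) : IsBoundedCylinder S fun Y => f (resample (freeColumns S) X Y) :=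
    hf.comp fun j _ Y Y' h i j' hj' => by simp only [resample, piecewise, h i j' hj']
  calc gipCorr R f
      = 𝔼 X ∈ Fintype.piFinset (fun _ => R), 𝔼 Y, gipSign {i | X i ∈ subcube S} S Y *
          f (resample (freeColumns S) X Y) := by
        rw [gipCorr, ← expect_expect_resample (freeColumns S) R freeColumns_piecewise
          fun r => piecewise_freeColumns_mem hR]
        simp only [gipSign_resample_freeColumns]
    _ ≤ 𝔼 X ∈ Fintype.piFinset (fun _ : ι => R),
          Real.cos (π / 2 ^ #S) ^ #{i | X i ∈ subcube S} :=
        expect_le_expect fun X _ => expect_gipSign_mul_le _ (f_comp X)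
    _ = 𝔼 X ∈ Fintype.piFinset (fun _ : ι => R),
          ∏ i, if X i ∈ subcube S then Real.cos (π / 2 ^ #S) else 1 := by
        simp only [prod_ite, prod_const, one_pow, mul_one]
    _ = _ := by
        rw [expect_piFinset_prod (fun _ => R) fun _ r =>
          if r ∈ subcube S then Real.cos (π / 2 ^ #S) else 1, expect_ite_mem_subcube hR,
          prod_const, card_univ]

theorem abs_gipCorr_le {S : Finset κ} (hS : S.Nonempty) {f : (ι → κ → Bool) → ℝ}
    (hf : IsBoundedCylinder S f) (hR : subcube S ⊆ R) :
    |gipCorr R f| ≤ (1 - 2 ^ #S * (1 - Real.cos (π / 2 ^ #S)) / #R) ^ Fintype.card ι :=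
  abs_le'.2 ⟨gipCorr_le hf hR, gipCorr_neg f ▸ gipCorr_le (hf.neg hS) hR⟩

end Correlation

section Cylinder

variable {n k : ℕ} {S : Finset (Fin k)} {χ : (Fin n → Fin k → Bool) → ℝ}

theorem IsCylinderOn.mono {T : Finset (Fin k)} (hST : S ⊆ T) (hχ : IsCylinderOn n k S χ) :
    IsCylinderOn n k T χ := by
  obtain ⟨φ, φ_mem, φ_eq, hφ⟩ := hχ
  refine ⟨fun j X => if j ∈ S then φ j X else 1, fun j _ X => ?_, fun j _ X Y h => ?_, fun X => ?_⟩
  · by_cases hj : j ∈ S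
    · simpa only [if_pos hj] using φ_mem j hj X
    · exact Or.inr (if_neg hj)
  · by_cases hj : j ∈ S
    · simpa only [if_pos hj] using φ_eq j hj X Y h
    · simp only [if_neg hj]
  · rw [hφ, prod_ite_mem, inter_eq_right.2 hST]

theorem IsCylinderOn.exists_card_eq {ℓ : ℕ} (hχ : IsCylinderOn n k S χ) (hS : #S ≤ ℓ)
    (hℓ : ℓ ≤ k) : ∃ T : Finset (Fin k), #T = ℓ ∧ IsCylinderOn n k T χ := by
  obtain ⟨T, hST, hT⟩ := exists_superset_card_eq hS (by simpa using hℓ)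
  exact ⟨T, hT, hχ.mono hST⟩

theorem IsCylinderOn.eq_zero_or_one (hχ : IsCylinderOn n k S χ) (X : Fin n → Fin k → Bool) :
    χ X = 0 ∨ χ X = 1 := by
  obtain ⟨φ, φ_mem, -, hφ⟩ := hχ
  rw [hφ]
  by_cases h : ∃ j ∈ S, φ j X = 0
  · obtain ⟨j, hj, hj0⟩ := h
    exact Or.inl (prod_eq_zero hj hj0)
  · exact Or.inr (prod_eq_one fun j hj => (φ_mem j hj X).resolve_left fun h0 => h ⟨j, hj, h0⟩)

theorem IsCylinderOn.abs_le_one (hχ : IsCylinderOn n k S χ) (X : Fin n → Fin k → Bool) :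
    |χ X| ≤ 1 := by
  obtain h | h := hχ.eq_zero_or_one X <;> simp [h]

theorem IsCylinderOn.isBoundedCylinder (hχ : IsCylinderOn n k S χ) : IsBoundedCylinder S χ := by
  obtain ⟨φ, φ_mem, φ_eq, hφ⟩ := hχ
  refine ⟨φ, fun j hj X => ?_, φ_eq, hφ⟩
  obtain h | h := φ_mem j hj X <;> simp [h]

theorem IsCylinderOn.one_sub {j : Fin k} (hχ : IsCylinderOn n k {j} χ) :
    IsCylinderOn n k {j} fun X => 1 - χ X := by
  obtain ⟨φ, φ_mem, φ_eq, hφ⟩ := hχ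
  refine ⟨fun j X => 1 - φ j X, fun j hj X => ?_, fun j hj X Y h =>
    congrArg _ (φ_eq j hj X Y h), fun X => ?_⟩
  · obtain h | h := φ_mem j hj X <;> simp [h]
  · simp only [hφ, prod_singleton]

end Cylinder

section NumericalBounds

theorem one_sub_mul_pow_le_rpow {p x : ℝ} (hp : 1 ≤ p) (hx : x ≤ 1) (hpx : p * x ≤ 1) (n : ℕ) :
    (1 - p * x) ^ n ≤ ((1 - x) ^ n) ^ p := by
  have bernoulli : 1 - p * x ≤ (1 - x) ^ p := by
    simpa only [mul_neg, ← sub_eq_add_neg] using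
      one_add_mul_self_le_rpow_one_add (neg_le_neg hx) hp
  calc (1 - p * x) ^ n ≤ ((1 - x) ^ p) ^ n := pow_le_pow_left₀ (sub_nonneg.2 hpx) bernoulli n
    _ = ((1 - x) ^ n) ^ p := Real.rpow_pow_comm (sub_nonneg.2 hx) p n

-- `7 / 24` is a rational lower bound for `1 - √2 / 2`, and halving the angle divides `1 - cos` by
-- at most `4`.
theorem seven_div_mul_pow_le_one_sub_cos (m : ℕ) :
    7 / 24 * (1 / 4) ^ m ≤ 1 - Real.cos (π / 2 ^ (m + 2)) := by
  induction m with
  | zero =>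
    have sqrt_two_le : √2 ≤ 17 / 12 := Real.sqrt_le_iff.2 (by norm_num)
    norm_num [Real.cos_pi_div_four]
    linarith
  | succ m ih =>
    have half_angle := sq_cos_pi_div_two_pow_succ (m + 2)
    have cos_le_one := Real.cos_le_one (π / 2 ^ (m + 3))
    rw [pow_succ]
    nlinarith

theorem one_sub_one_div_pow_nonneg {y : ℝ} (hy : 1 ≤ y) (n : ℕ) : 0 ≤ (1 - 1 / y) ^ n :=
  pow_nonneg (sub_nonneg.2 ((div_le_one (one_pos.trans_le hy)).2 hy)) n

theorem one_sub_cos_pow_le_rpow {m : ℕ} {C : ℝ} (hC : 2 ^ (m + 2) ≤ C) (n : ℕ) :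
    (1 - 2 ^ (m + 2) * (1 - Real.cos (π / 2 ^ (m + 2))) / C) ^ n ≤
      ((1 - 1 / (2 ^ (m + 1) * C)) ^ n) ^ (7 / 3 : ℝ) := by
  set c := Real.cos (π / 2 ^ (m + 2))
  set x := 1 / (2 ^ (m + 1) * C) with hx
  have C_pos : 0 < C := (by positivity : (0 : ℝ) < 2 ^ (m + 2)).trans_le hC
  have base_nonneg : 0 ≤ 1 - 2 ^ (m + 2) * (1 - c) / C := by
    rw [sub_nonneg, div_le_one C_pos]
    exact (mul_le_of_le_one_right (by positivity)
      (by linarith [cos_pi_div_two_pow_succ_nonneg (m + 1)])).trans hC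
  have base_le : 1 - 2 ^ (m + 2) * (1 - c) / C ≤ 1 - 7 / 3 * x := by
    have scaled : 7 / 3 * x = 2 ^ (m + 2) * (7 / 24 * (1 / 4) ^ m) / C := by
      have four_pow : (4 : ℝ) ^ m = 2 ^ m * 2 ^ m := by rw [← mul_pow]; norm_num
      rw [hx, one_div_pow, four_pow, pow_succ, pow_add]
      field_simp
      norm_num
    rw [scaled]
    gcongr
    exact seven_div_mul_pow_le_one_sub_cos m
  have x_le : 7 / 3 * x ≤ 1 := by linarith
  exact (pow_le_pow_left₀ base_nonneg base_le n).trans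
    (one_sub_mul_pow_le_rpow (by norm_num) (by linarith) x_le n)

theorem one_sub_two_div_pow_le {m p : ℕ} {C : ℝ} (hC : 2 ≤ C) (hp : p ≤ 2 ^ (m + 1)) (n : ℕ) :
    (1 - 2 / C) ^ n ≤ ((1 - 1 / (2 ^ m * C)) ^ n) ^ p := by
  set x := 1 / (2 ^ m * C) with hx
  have C_pos : 0 < C := two_pos.trans_le hC
  have x_nonneg : 0 ≤ x := by positivity
  have x_le : x ≤ 2⁻¹ := by
    rw [hx, ← one_div]
    exact one_div_le_one_div_of_le two_pos
      (hC.trans (le_mul_of_one_le_left C_pos.le (one_le_pow₀ one_le_two)))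
  have mul_x_le : p * x ≤ 2 / C := by
    calc p * x ≤ 2 ^ (m + 1) * x := mul_le_mul_of_nonneg_right (by exact_mod_cast hp) x_nonneg
      _ = 2 / C := by
          rw [hx, pow_succ]
          field_simp
  have base_le : 1 - 2 / C ≤ (1 - x) ^ p := by
    calc 1 - 2 / C ≤ 1 + p * -x := by linarith
      _ ≤ (1 + -x) ^ p := one_add_mul_le_pow (by linarith) p
      _ = (1 - x) ^ p := by rw [sub_eq_add_neg]
  rw [pow_right_comm]
  exact pow_le_pow_left₀ (sub_nonneg.2 ((div_le_one C_pos).2 hC)) base_le n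

theorem one_third_le_of_complement {A β τ : ℝ} (hβ : 0 ≤ β) (hτ : 0 ≤ τ) (hβτ : β ≤ τ ^ 2)
    (h : 1 + β ≤ 6 * (A * β)) : 1 / 3 ≤ A * τ := by
  have A_pos : 0 < 6 * A - 1 := pos_of_mul_pos_left (by linarith : 0 < (6 * A - 1) * β) hβ
  have sq_bound : 1 + τ ^ 2 ≤ 6 * A * τ * τ := by nlinarith
  have τ_pos : 0 < τ := hτ.lt_of_ne fun h0 => by simp [← h0] at sq_bound; linarith
  have amgm : 2 * τ ≤ 1 + τ ^ 2 := by linarith [two_mul_le_add_sq 1 τ]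
  linarith [le_of_mul_le_mul_right (amgm.trans sq_bound) τ_pos]

-- For `τ ≤ 1 / 2`, the left-hand side of `h` is at least `1 / 6 - 1 / 32 = (1 / 3) * (13 / 32)`.
theorem one_third_le_of_discrepancy {A β δ τ : ℝ} (hA : 2 / 3 ≤ A) (hτ : 0 ≤ τ)
    (hβ : β ≤ τ ^ (7 / 3 : ℝ)) (hδ : δ ≤ τ ^ 4) (h : 1 / 6 - δ / 2 ≤ A * β) :
    1 / 3 ≤ A * τ := by
  obtain h_half | h_half := le_total (1 / 2) τ
  · nlinarith
  have τ_pow_four : τ ^ 4 ≤ 1 / 16 := (pow_le_pow_left₀ hτ h_half 4).trans_eq (by norm_num)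
  have rpow_le : τ ^ (7 / 3 : ℝ) ≤ 13 / 32 * τ := by
    refine le_of_pow_le_pow_left₀ three_ne_zero (by positivity) ?_
    calc (τ ^ (7 / 3 : ℝ)) ^ 3 = τ ^ 4 * τ ^ 3 := by
          rw [← Real.rpow_mul_natCast hτ, ← pow_add, ← Real.rpow_natCast]
          norm_num
      _ ≤ (13 / 32) ^ 3 * τ ^ 3 := by
          gcongr
          exact τ_pow_four.trans (by norm_num)
      _ = (13 / 32 * τ) ^ 3 := (mul_pow _ _ _).symm
  have : A * β ≤ A * (13 / 32 * τ) := by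
    gcongr
    exact hβ.trans rpow_le
  linarith

end NumericalBounds

section Duality

theorem abs_sum_mul_le {α : Type*} {J : Finset α} {v : α → ℝ} {β : ℝ} (a : α → ℝ)
    (hv : ∀ j ∈ J, |v j| ≤ β) : |∑ j ∈ J, a j * v j| ≤ (∑ j ∈ J, |a j|) * β := by
  rw [sum_mul]
  refine (abs_sum_le_sum_abs _ _).trans (sum_le_sum fun j hj => ?_)
  rw [abs_mul]
  exact mul_le_mul_of_nonneg_left (hv j hj) (abs_nonneg _)

variable {n k : ℕ}

theorem exists_GIP_eq_true (hn : 0 < n) (hk : 0 < k) :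
    ∃ X : Fin n → Fin k → Bool, GIP n k X = true := by
  have : NeZero n := ⟨hn.ne'⟩
  have : NeZero k := ⟨hk.ne'⟩
  refine ⟨fun i _ => decide (i = 0), ?_⟩
  simp [GIP, filter_eq']

theorem exists_two_thirds_le_of_approx (hn : 0 < n) (hk : 0 < k)
    {P : (Fin n → Fin k → Bool) → ℝ}
    (hP : ∀ X, |(if GIP n k X then (1 : ℝ) else 0) - P X| ≤ 1 / 3) : ∃ X, 2 / 3 ≤ P X := by
  obtain ⟨X, hX⟩ := exists_GIP_eq_true hn hk
  have := (abs_le.1 (hP X)).2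
  rw [if_pos hX] at this
  exact ⟨X, by linarith⟩

theorem gipCorr_nearOnes_le_of_approx (ℓ : ℕ) {P : (Fin n → Fin k → Bool) → ℝ}
    (hP : ∀ X, |(if GIP n k X then (1 : ℝ) else 0) - P X| ≤ 1 / 3) :
    gipCorr (nearOnes (Fin k) ℓ) P ≤ (1 - 2 / #(nearOnes (Fin k) ℓ)) ^ n / 2 - 1 / 6 := by
  set Ω := Fintype.piFinset fun _ : Fin n => nearOnes (Fin k) ℓ
  have Ω_nonempty : Ω.Nonempty := Fintype.piFinset_nonempty.2 fun _ => nearOnes_nonempty ℓ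
  have pointwise (X) : gipSign univ univ X * P X ≤ gipSign univ univ X * 1 / 2 - 1 / 6 := by
    have := abs_le.1 (hP X)
    rw [gipSign_univ]
    split_ifs at this ⊢ <;> linarith
  calc gipCorr (nearOnes (Fin k) ℓ) P
      ≤ 𝔼 X ∈ Ω, (gipSign univ univ X * 1 / 2 - 1 / 6) := expect_le_expect fun X _ => pointwise X
    _ = gipCorr (nearOnes (Fin k) ℓ) (fun _ : Fin n → Fin k → Bool => 1) / 2 - 1 / 6 := by
        rw [expect_sub_distrib, expect_const Ω_nonempty, ← expect_div, gipCorr]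
    _ = _ := by rw [gipCorr_one (subcube_subset_nearOnes (by simp)), Fintype.card_fin]

end Duality

section LowerBound

variable {n k : ℕ} {α : Type*} {J : Finset α} {χ : α → (Fin n → Fin k → Bool) → ℝ} {a : α → ℝ}

-- If `χ` vanishes at `X`, this is the bound on the correlation of `χ`; otherwise, it is the
-- bound for `1 - χ`, which is again a `{j}`-cylinder intersection.
theorem abs_mul_sub_gipCorr_le {R : Finset (Fin k → Bool)} {j : Fin k}
    {f : (Fin n → Fin k → Bool) → ℝ} (hf : IsCylinderOn n k {j} f) (hR : subcube {j} ⊆ R)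
    (X : Fin n → Fin k → Bool) :
    |(1 - 2 / #R) ^ n * f X - gipCorr R f| ≤ (1 - 2 / #R) ^ n := by
  have bound {g : (Fin n → Fin k → Bool) → ℝ} (hg : IsCylinderOn n k {j} g) :
      |gipCorr R g| ≤ (1 - 2 / #R) ^ n := by
    simpa using abs_gipCorr_le (singleton_nonempty j) hg.isBoundedCylinder hR
  have gipCorr_one : gipCorr R (fun _ : Fin n → Fin k → Bool => 1) = (1 - 2 / #R) ^ n := by
    simpa using gipCorr_one (ι := Fin n) ((subcube_mono (empty_subset {j})).trans hR)
  obtain h | h := hf.eq_zero_or_one X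
  · simpa [h] using bound hf
  · simpa [h, gipCorr_sub, gipCorr_one] using bound hf.one_sub

theorem one_third_le_sum_abs_mul_of_card_eq_one (hn : 0 < n) (hk : 0 < k)
    (hχ : ∀ j ∈ J, ∃ S : Finset (Fin k), #S = 1 ∧ IsCylinderOn n k S (χ j))
    (hP : ∀ X, |(if GIP n k X then (1 : ℝ) else 0) - ∑ j ∈ J, a j * χ j X| ≤ 1 / 3) :
    1 / 3 ≤ (∑ j ∈ J, |a j|) * (1 - 1 / #(nearOnes (Fin k) 1)) ^ n := by
  obtain ⟨X, hX⟩ := exists_two_thirds_le_of_approx hn hk hP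
  have corr_le := gipCorr_nearOnes_le_of_approx 1 hP
  have hC : (2 : ℝ) ≤ #(nearOnes (Fin k) 1) := by
    exact_mod_cast two_pow_le_card_nearOnes (κ := Fin k) (ℓ := 1) (by rwa [Fintype.card_fin])
  set R := nearOnes (Fin k) 1
  set β : ℝ := (1 - 2 / #R) ^ n
  have β_nonneg : 0 ≤ β := pow_nonneg (sub_nonneg.2 ((div_le_one (two_pos.trans_le hC)).2 hC)) n
  have β_le : β ≤ ((1 - 1 / #R) ^ n) ^ 2 := by
    simpa using one_sub_two_div_pow_le (m := 0) hC (le_refl 2) n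
  have dual_le : β * (∑ j ∈ J, a j * χ j X) - gipCorr R (fun X => ∑ j ∈ J, a j * χ j X) ≤
      (∑ j ∈ J, |a j|) * β := by
    rw [gipCorr_sum_mul, mul_sum, ← sum_sub_distrib]
    simp only [mul_left_comm β, ← mul_sub]
    refine (le_abs_self _).trans (abs_sum_mul_le a fun j hj => ?_)
    obtain ⟨S, hS, hχS⟩ := hχ j hj
    obtain ⟨j', rfl⟩ := card_eq_one.1 hS
    exact abs_mul_sub_gipCorr_le hχS (subcube_subset_nearOnes hS.le) X
  have τ_nonneg := one_sub_one_div_pow_nonneg (one_le_two.trans hC) n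
  exact one_third_le_of_complement β_nonneg τ_nonneg β_le (by nlinarith)

theorem one_third_le_sum_abs_mul_of_card_eq_add_two (m : ℕ) (hn : 0 < n) (hm : m + 2 ≤ k)
    (hχ : ∀ j ∈ J, ∃ S : Finset (Fin k), #S = m + 2 ∧ IsCylinderOn n k S (χ j))
    (hP : ∀ X, |(if GIP n k X then (1 : ℝ) else 0) - ∑ j ∈ J, a j * χ j X| ≤ 1 / 3) :
    1 / 3 ≤ (∑ j ∈ J, |a j|) * (1 - 1 / (2 ^ (m + 1) * #(nearOnes (Fin k) (m + 2)))) ^ n := by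
  obtain ⟨X, hX⟩ := exists_two_thirds_le_of_approx hn (by lia) hP
  have corr_le := gipCorr_nearOnes_le_of_approx (m + 2) hP
  have hC : (2 : ℝ) ^ (m + 2) ≤ #(nearOnes (Fin k) (m + 2)) := by
    exact_mod_cast two_pow_le_card_nearOnes (κ := Fin k) (by rwa [Fintype.card_fin])
  set R := nearOnes (Fin k) (m + 2)
  set β : ℝ := (1 - 2 ^ (m + 2) * (1 - Real.cos (π / 2 ^ (m + 2))) / #R) ^ n
  have sum_abs_ge : 2 / 3 ≤ ∑ j ∈ J, |a j| := by
    refine hX.trans ((le_abs_self _).trans ?_)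
    simpa only [mul_one] using abs_sum_mul_le a fun j hj =>
      let ⟨_, _, hχS⟩ := hχ j hj; hχS.abs_le_one X
  have abs_corr_le : |gipCorr R (fun X => ∑ j ∈ J, a j * χ j X)| ≤ (∑ j ∈ J, |a j|) * β := by
    rw [gipCorr_sum_mul]
    refine abs_sum_mul_le a fun j hj => ?_
    obtain ⟨S, hS, hχS⟩ := hχ j hj
    simpa only [hS, Fintype.card_fin] using abs_gipCorr_le (card_pos.1 (hS ▸ Nat.succ_pos _))
      hχS.isBoundedCylinder (subcube_subset_nearOnes hS.le)
  have C_ge_two : (2 : ℝ) ≤ #R := (le_self_pow₀ one_le_two (by lia)).trans hC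
  have one_le_denom : (1 : ℝ) ≤ 2 ^ (m + 1) * #R :=
    one_le_mul_of_one_le_of_one_le (one_le_pow₀ one_le_two) (one_le_two.trans C_ge_two)
  have four_le : 4 ≤ 2 ^ (m + 2) := Nat.pow_le_pow_right two_pos (by lia : 2 ≤ m + 2)
  exact one_third_le_of_discrepancy sum_abs_ge (one_sub_one_div_pow_nonneg one_le_denom n)
    (one_sub_cos_pow_le_rpow hC n) (one_sub_two_div_pow_le C_ge_two four_le n)
    (by linarith [neg_le_of_abs_le abs_corr_le])

end LowerBound

end

theorem stmt_8_general (n k ℓ : ℕ) (hn : 0 < n) (hℓ : 0 < ℓ) (hℓk : ℓ ≤ k)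
    {ι : Type*} (J : Finset ι) (a : ι → ℝ) (χ : ι → ((Fin n → Fin k → Bool) → ℝ))
    (hcyl : ∀ j ∈ J, ∃ S : Finset (Fin k), S.card ≤ ℓ ∧ IsCylinderOn n k S (χ j))
    (happ : ∀ X, |(if GIP n k X then (1 : ℝ) else 0) - ∑ j ∈ J, a j * χ j X| ≤ 1 / 3) :
    (1 / 3 : ℝ) *
        ((1 - 1 / ((2 : ℝ) ^ (ℓ - 1) *
          ∑ i ∈ Finset.range (ℓ + 1), (k.choose i : ℝ))) ^ n)⁻¹ ≤
      ∑ j ∈ J, |a j| := by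
  have hcyl_eq (j) (hj : j ∈ J) : ∃ S : Finset (Fin k), #S = ℓ ∧ IsCylinderOn n k S (χ j) :=
    let ⟨_, hS, hχS⟩ := hcyl j hj; hχS.exists_card_eq hS hℓk
  have hC : ∑ i ∈ range (ℓ + 1), (k.choose i : ℝ) = #(nearOnes (Fin k) ℓ) := by
    rw [card_nearOnes, Fintype.card_fin, Nat.cast_sum]
  have one_le_C : (1 : ℝ) ≤ #(nearOnes (Fin k) ℓ) :=
    Nat.one_le_cast.2 (card_pos.2 (nearOnes_nonempty ℓ))
  rw [hC, ← div_eq_mul_inv]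
  refine div_le_of_le_mul₀ (one_sub_one_div_pow_nonneg
    (one_le_mul_of_one_le_of_one_le (one_le_pow₀ one_le_two) one_le_C) n)
    (sum_nonneg fun j _ => abs_nonneg (a j)) ?_
  obtain _ | _ | m := ℓ
  · exact absurd hℓ (lt_irrefl 0)
  · simpa using one_third_le_sum_abs_mul_of_card_eq_one hn hℓk hcyl_eq happ
  · exact one_third_le_sum_abs_mul_of_card_eq_add_two m hn hℓk hcyl_eq happ

/-- If `Π = Σ_j a_j χ_j` is a linear combination of `ℓ`-cylinder
intersections with `|Π| ≤ 1` everywhere and `|GIP_{n,k} − Π| ≤ 1/3` everywhere, then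
`Σ_j |a_j| ≥ (1/3)·(1 − 1/(2^{ℓ−1}·C(k,≤ℓ)))^{−n}`. -/
theorem stmt_8 (n k ℓ : ℕ) (hn : 0 < n) (hk : 0 < k) (hℓ : 0 < ℓ) (hℓk : ℓ ≤ k)
    {ι : Type*} (J : Finset ι) (a : ι → ℝ) (χ : ι → ((Fin n → Fin k → Bool) → ℝ))
    (hcyl : ∀ j ∈ J, ∃ S : Finset (Fin k), S.card ≤ ℓ ∧ IsCylinderOn n k S (χ j))
    (hbnd : ∀ X, |∑ j ∈ J, a j * χ j X| ≤ 1)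
    (happ : ∀ X, |(if GIP n k X then (1 : ℝ) else 0) - ∑ j ∈ J, a j * χ j X| ≤ 1 / 3) :
    (1 / 3 : ℝ) *
        ((1 - 1 / ((2 : ℝ) ^ (ℓ - 1) *
          ∑ i ∈ Finset.range (ℓ + 1), (k.choose i : ℝ))) ^ n)⁻¹ ≤
      ∑ j ∈ J, |a j| := by
  exact stmt_8_general n k ℓ hn hℓ hℓk J a χ hcyl happ
end

section
/- For any positive integers k, m and n₁, n₂, …, n_m, the discrepancy of the XOR of m independent instances of set disjointness satisfies disc(⊕_{i=1}^m DISJ_{n_i,k}, ⊗_{i=1}^m σ_{n_i,k}) ≤ ∏_{i=1}^m ( (√(2^k−1) + 1) · √(2^k−2) ) / (2√(n_i)). -/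
open Finset

/-- Set disjointness: `DISJ_{n,k}(X) = 1` iff `X` has no all-ones row. -/
def DISJ (n k : ℕ) (X : Fin n → Fin k → Bool) : Bool :=
  decide (∀ i, ∃ j, X i j = false)

/-- `σ⁰_{n,k}`: the uniform distribution on `n×k` Boolean matrices without an
all-ones row. -/
noncomputable def sigma0 (n k : ℕ) (X : Fin n → Fin k → Bool) : ℝ :=
  if ∀ i, ∃ j, X i j = false then
    (1 : ℝ) /
      (Finset.univ.filter (fun Y : Fin n → Fin k → Bool => ∀ i, ∃ j, Y i j = false)).card
  else 0

/-- `σ¹_{n,k}`: the uniform distribution on `n×k` Boolean matrices with precisely one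
all-ones row. -/
noncomputable def sigma1 (n k : ℕ) (X : Fin n → Fin k → Bool) : ℝ :=
  if (Finset.univ.filter (fun i : Fin n => ∀ j, X i j = true)).card = 1 then
    (1 : ℝ) /
      (Finset.univ.filter (fun Y : Fin n → Fin k → Bool =>
        (Finset.univ.filter (fun i : Fin n => ∀ j, Y i j = true)).card = 1)).card
  else 0

/-- `σ_{n,k} = ½σ⁰_{n,k} + ½σ¹_{n,k}`. -/
noncomputable def sigmaD (n k : ℕ) (X : Fin n → Fin k → Bool) : ℝ :=
  (sigma0 n k X + sigma1 n k X) / 2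

/-- `χ` is an `S`-cylinder intersection on tuples `(X₁,…,X_m)` of Boolean matrices
`X_i ∈ {0,1}^{n_i×k}`: a product over `j ∈ S` of `{0,1}`-valued functions `φ j`,
where `φ j` does not depend on the `j`-th columns of `X₁,…,X_m`. -/
def IsCylinderT {m : ℕ} (nn : Fin m → ℕ) (k : ℕ) (S : Finset (Fin k))
    (χ : (∀ i, Fin (nn i) → Fin k → Bool) → ℝ) : Prop :=
  ∃ φ : Fin k → ((∀ i, Fin (nn i) → Fin k → Bool) → ℝ),
    (∀ j ∈ S, ∀ X, φ j X = 0 ∨ φ j X = 1) ∧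
    (∀ j ∈ S, ∀ X Y, (∀ i i' j', j' ≠ j → X i i' j' = Y i i' j') → φ j X = φ j Y) ∧
    (∀ X, χ X = ∏ j ∈ S, φ j X)

/-- The discrepancy (maximum over all `S ⊆ {1,…,k}` of the `S`-discrepancy) of a
Boolean function `F` on tuples of matrices, with respect to the distribution `μ`. -/
noncomputable def discT {m : ℕ} (nn : Fin m → ℕ) (k : ℕ)
    (F : (∀ i, Fin (nn i) → Fin k → Bool) → Bool)
    (μ : (∀ i, Fin (nn i) → Fin k → Bool) → ℝ) : ℝ :=
  sSup {t : ℝ | ∃ S : Finset (Fin k), ∃ χ : (∀ i, Fin (nn i) → Fin k → Bool) → ℝ,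
    IsCylinderT nn k S χ ∧
    t = |∑ X : ∀ i, Fin (nn i) → Fin k → Bool,
          (if F X then (-1 : ℝ) else 1) * μ X * χ X|}

/-!
On a single matrix, `(-1)^DISJ · σ = (σ¹ - σ⁰) / 2` is a combination of a mean-zero function, whose
`L¹` norm is small by Cauchy–Schwarz, and of block signs: the sign of the last entry of the only row
of a block that is full up to that entry. All `m` matrices are stacked into a single one with
disjoint sets of rows, so everything reduces to the correlation of products of signs of disjoint
blocks with cylinder intersections. This is bounded by induction on the number of columns.
Cauchy–Schwarz with weight `2 ^ (-#(full rows))` removes the factor that ignores the first column;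
after squaring, the first column splits each block into four, and the two signs multiply to a
combination of products of signs of smaller blocks, with one column fewer, and functions whose
`L¹` norms are known exactly.
-/

namespace DisjXor

open scoped BigOperators

section Expectation

variable {R A ι : Type*}

lemma dependsOn_mul [DecidableEq R] {S T : Finset R} {f g : (R → A) → ℝ}
    (hf : DependsOn f (S : Set R)) (hg : DependsOn g (T : Set R)) :
    DependsOn (fun x => f x * g x) ((S ∪ T : Finset R) : Set R) :=
  fun _ _ h => congr_arg₂ (· * ·) (hf fun r hr => h r (mem_union_left T hr))
    (hg fun r hr => h r (mem_union_right S hr))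

lemma dependsOn_prod {s : Finset ι} {S : ι → Finset R} {f : ι → (R → A) → ℝ}
    (hf : ∀ i ∈ s, DependsOn (f i) (S i : Set R)) {T : Set R} (hT : ∀ i ∈ s, (S i : Set R) ⊆ T) :
    DependsOn (fun x => ∏ i ∈ s, f i x) T :=
  fun _ _ h => prod_congr rfl fun i hi => hf i hi fun r hr => h r (hT i hi hr)

lemma pow_card_filter_eq_prod (S : Finset ι) (P : ι → Prop) [DecidablePred P] (t : ℝ) :
    t ^ #{r ∈ S | P r} = ∏ r ∈ S, if P r then t else 1 := by
  rw [prod_ite, prod_const, prod_const_one, mul_one]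

lemma ite_card_filter_eq_one [DecidableEq ι] (S : Finset ι) (P : ι → Prop) [DecidablePred P] :
    (if #{r ∈ S | P r} = 1 then (1 : ℝ) else 0) =
      ∑ r ∈ S, (if P r then 1 else 0) * ∏ r' ∈ S.erase r, if P r' then 0 else 1 := by
  have term (r : ι) (hr : r ∈ S) :
      ((if P r then 1 else 0) * ∏ r' ∈ S.erase r, if P r' then (0 : ℝ) else 1) =
        if ({r ∈ S | P r} : Finset ι) = {r} then 1 else 0 := by
    have lone_iff : (P r ∧ ∀ r' ∈ S.erase r, ¬ P r') ↔ ({r ∈ S | P r} : Finset ι) = {r} := by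
      simp only [Finset.ext_iff, mem_filter, mem_singleton, mem_erase]
      grind
    simp only [← ite_not (P _) (1 : ℝ) 0, prod_ite_zero, prod_const_one, ite_zero_mul_ite_zero,
      mul_one, lone_iff]
  rw [sum_congr rfl term]
  by_cases h : #{r ∈ S | P r} = 1
  · obtain ⟨r₀, hr₀⟩ := card_eq_one.1 h
    have hmem : r₀ ∈ S := (mem_filter.1 (hr₀ ▸ mem_singleton_self r₀)).1
    simp [hr₀, singleton_inj, hmem]
  · rw [if_neg h, sum_eq_zero fun r _ => if_neg fun hr => h (by rw [hr, card_singleton])]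

variable [Fintype R] [DecidableEq R] [Fintype A]

lemma expect_piecewise (S : Finset R) (g : (R → A) → ℝ) :
    𝔼 x, 𝔼 y, g (S.piecewise x y) = 𝔼 x, g x := by
  rcases isEmpty_or_nonempty (R → A) with h | h
  · simp
  have swap_involutive : Function.Involutive fun z : (R → A) × (R → A) =>
      (S.piecewise z.1 z.2, S.piecewise z.2 z.1) := fun z => by
    ext r <;> by_cases hr : r ∈ S <;> simp [hr]
  calc 𝔼 x, 𝔼 y, g (S.piecewise x y)
      = 𝔼 z : (R → A) × (R → A), g (S.piecewise z.1 z.2) :=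
        (expect_product univ univ fun z : (R → A) × (R → A) => g (S.piecewise z.1 z.2)).symm
    _ = 𝔼 z : (R → A) × (R → A), g z.1 :=
        Fintype.expect_bijective _ swap_involutive.bijective _ _ fun _ => rfl
    _ = 𝔼 x, 𝔼 _y : R → A, g x := expect_product univ univ fun z : (R → A) × (R → A) => g z.1
    _ = 𝔼 x, g x := by simp only [Fintype.expect_const]

lemma expect_mul_of_dependsOn {S T : Finset R} (hST : Disjoint S T) {f g : (R → A) → ℝ}
    (hf : DependsOn f (S : Set R)) (hg : DependsOn g (T : Set R)) :
    𝔼 x, f x * g x = (𝔼 x, f x) * 𝔼 x, g x := by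
  rw [← expect_piecewise S, Fintype.expect_mul_expect]
  refine expect_congr rfl fun x _ => expect_congr rfl fun y _ => ?_
  rw [hf fun r hr => S.piecewise_eq_of_mem x y hr,
    hg fun r hr => S.piecewise_eq_of_notMem x y (disjoint_right.1 hST hr)]

lemma expect_prod_of_dependsOn [Nonempty A] {s : Finset ι} {S : ι → Finset R}
    (hS : (s : Set ι).PairwiseDisjoint S) {f : ι → (R → A) → ℝ}
    (hf : ∀ i ∈ s, DependsOn (f i) (S i : Set R)) :
    𝔼 x, ∏ i ∈ s, f i x = ∏ i ∈ s, 𝔼 x, f i x := by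
  classical
  induction s using Finset.induction_on with
  | empty => simp
  | insert i s hi ih =>
    rw [coe_insert, Set.pairwiseDisjoint_insert_of_notMem (by simpa using hi)] at hS
    rw [forall_mem_insert] at hf
    have hprod : DependsOn (fun x => ∏ j ∈ s, f j x) (s.biUnion S : Set R) :=
      dependsOn_prod hf.2 fun j hj => coe_subset.2 (subset_biUnion_of_mem S hj)
    simp only [prod_insert hi]
    rw [expect_mul_of_dependsOn ((disjoint_biUnion_right _ _ _).2 hS.2) hf.1 hprod, ih hS.1 hf.2]

variable [Nonempty A]

lemma expect_eval (r : R) (f : A → ℝ) : 𝔼 x : R → A, f (x r) = 𝔼 a, f a := by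
  rw [Fintype.expect_equiv (Equiv.funSplitAt r A) (fun x => f (x r)) (fun z => f z.1)
    fun x => by simp [Equiv.funSplitAt]]
  exact (expect_product univ univ fun z : A × ({j // j ≠ r} → A) => f z.1).trans
    (by simp only [Fintype.expect_const])

lemma expect_prod_eval (S : Finset R) (f : R → A → ℝ) :
    𝔼 x : R → A, ∏ r ∈ S, f r (x r) = ∏ r ∈ S, 𝔼 a, f r a := by
  have hdisj : (S : Set R).PairwiseDisjoint fun r => ({r} : Finset R) :=
    fun r _ r' _ hne => disjoint_singleton.2 hne
  rw [expect_prod_of_dependsOn hdisj fun r _ x y h => by rw [h r (by simp)]]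
  simp only [expect_eval]

lemma expect_sum_mul_prod_erase (S : Finset R) (a m : A → ℝ) :
    𝔼 x : R → A, ∑ r ∈ S, a (x r) * ∏ r' ∈ S.erase r, m (x r') =
      #S * (𝔼 b, a b) * (𝔼 b, m b) ^ (#S - 1) := by
  have term (r : R) (hr : r ∈ S) : 𝔼 x : R → A, a (x r) * ∏ r' ∈ S.erase r, m (x r') =
      (𝔼 b, a b) * (𝔼 b, m b) ^ (#S - 1) := by
    rw [expect_mul_of_dependsOn (S := {r}) (T := S.erase r) (by simp)
      (fun x y h => by rw [h r (by simp)])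
      (fun x y h => prod_congr rfl fun r' hr' => by rw [h r' hr']),
      expect_eval, expect_prod_eval (S.erase r) fun _ => m]
    simp [hr]
  rw [expect_sum_comm, sum_congr rfl term]
  simp [mul_assoc]

lemma expect_sq_sum_mul_prod (S : Finset R) (a b : A → ℝ) (hab : 𝔼 c, a c * b c = 0) :
    𝔼 x : R → A, (∑ r ∈ S, a (x r)) ^ 2 * ∏ r ∈ S, b (x r) =
      #S * (𝔼 c, a c ^ 2 * b c) * (𝔼 c, b c) ^ (#S - 1) := by
  induction S using Finset.induction_on with
  | empty => simp
  | insert r S hr ih =>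
    have indep (u : A → ℝ) (v : (R → A) → ℝ) (hv : DependsOn v (S : Set R)) :
        𝔼 x : R → A, u (x r) * v x = (𝔼 c, u c) * 𝔼 x, v x := by
      rw [expect_mul_of_dependsOn (disjoint_singleton_left.2 hr)
        (fun x y h => by rw [h r (by simp)]) hv, expect_eval]
    have hprod : DependsOn (fun x : R → A => ∏ r' ∈ S, b (x r')) (S : Set R) :=
      fun x y h => prod_congr rfl fun r' hr' => by rw [h r' hr']
    have hsum : DependsOn (fun x : R → A => ∑ r' ∈ S, a (x r')) (S : Set R) :=
      fun x y h => sum_congr rfl fun r' hr' => by rw [h r' hr']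
    have hcross : DependsOn (fun x : R → A => (∑ r' ∈ S, a (x r')) * ∏ r' ∈ S, b (x r'))
        (S : Set R) := fun x y h => congr_arg₂ (· * ·) (hsum h) (hprod h)
    have hsq : DependsOn (fun x : R → A => (∑ r' ∈ S, a (x r')) ^ 2 * ∏ r' ∈ S, b (x r'))
        (S : Set R) := fun x y h => congr_arg₂ (fun s t => s ^ 2 * t) (hsum h) (hprod h)
    have expand (x : R → A) :
        (∑ r' ∈ insert r S, a (x r')) ^ 2 * ∏ r' ∈ insert r S, b (x r') =
          a (x r) ^ 2 * b (x r) * ∏ r' ∈ S, b (x r') +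
          2 * (a (x r) * b (x r) * ((∑ r' ∈ S, a (x r')) * ∏ r' ∈ S, b (x r'))) +
          b (x r) * ((∑ r' ∈ S, a (x r')) ^ 2 * ∏ r' ∈ S, b (x r')) := by
      rw [sum_insert hr, prod_insert hr]; ring
    simp only [expand, expect_add_distrib, ← mul_expect]
    rw [indep (fun c => a c ^ 2 * b c) _ hprod, indep (fun c => a c * b c) _ hcross,
      indep b _ hsq, hab, ih, expect_prod_eval S fun _ => b, prod_const, card_insert_of_notMem hr]
    rcases S.eq_empty_or_nonempty with rfl | hS
    · simp
    rw [add_tsub_cancel_right, ← Nat.sub_add_cancel hS.card_pos, pow_succ]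
    push_cast
    ring

lemma expect_pow_card_filter (S : Finset R) (P : A → Prop) [DecidablePred P] (t : ℝ) :
    𝔼 x : R → A, t ^ #{r ∈ S | P (x r)} = (𝔼 a, if P a then t else 1) ^ #S := by
  simp only [pow_card_filter_eq_prod]
  rw [expect_prod_eval S fun _ a => if P a then t else 1, prod_const]

lemma expect_card_filter_eq_one (S : Finset R) (P : A → Prop) [DecidablePred P] :
    (𝔼 x : R → A, if #{r ∈ S | P (x r)} = 1 then (1 : ℝ) else 0) =
      #S * (𝔼 a, if P a then 1 else 0) * (𝔼 a, if P a then 0 else 1) ^ (#S - 1) := by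
  simp only [ite_card_filter_eq_one S fun _ => P _]
  exact expect_sum_mul_prod_erase S (fun a => if P a then 1 else 0) fun a => if P a then 0 else 1

lemma expect_sq_le_expect_mul_expect {α : Type*} [Fintype α] {f g h : α → ℝ} (hf : ∀ x, 0 ≤ f x)
    (hg : ∀ x, 0 ≤ g x) (hsq : ∀ x, h x ^ 2 ≤ f x * g x) :
    (𝔼 x, h x) ^ 2 ≤ (𝔼 x, f x) * 𝔼 x, g x := by
  simp only [Fintype.expect_eq_sum_div_card, div_pow, div_mul_div_comm, ← sq]
  gcongr
  exact sum_sq_le_sum_mul_sum_of_sq_le_mul _ (fun x _ => hf x) (fun x _ => hg x) fun x _ => hsq x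

end Expectation

section Cylinders

variable {R : Type*} {k p : ℕ}

/-- A cylinder intersection on `R × k` Boolean matrices with real weights: a product over all
columns `j` of functions bounded by one in absolute value, the `j`-th of which ignores column `j`.
Real values make the notion stable under multiplication and under fixing some of the entries. -/
def IsBoundedCylinder (F : (R → Fin k → Bool) → ℝ) : Prop :=
  ∃ f : Fin k → (R → Fin k → Bool) → ℝ,
    (∀ j x, |f j x| ≤ 1) ∧
    (∀ j x y, (∀ r, ∀ i ≠ j, x r i = y r i) → f j x = f j y) ∧
    ∀ x, F x = ∏ j, f j x

lemma isBoundedCylinder_one : IsBoundedCylinder fun _ : R → Fin k → Bool => (1 : ℝ) :=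
  ⟨fun _ _ => 1, by simp, fun _ _ _ _ => rfl, by simp⟩

lemma IsBoundedCylinder.mul {F G : (R → Fin k → Bool) → ℝ} (hF : IsBoundedCylinder F)
    (hG : IsBoundedCylinder G) : IsBoundedCylinder fun x => F x * G x := by
  obtain ⟨f, hf, hfi, hfF⟩ := hF
  obtain ⟨g, hg, hgi, hgG⟩ := hG
  refine ⟨fun j x => f j x * g j x, fun j x => ?_, fun j x y h => ?_, fun x => ?_⟩
  · rw [abs_mul]
    exact mul_le_one₀ (hf j x) (abs_nonneg _) (hg j x)
  · simp only [hfi j x y h, hgi j x y h]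
  · simp only [hfF, hgG, prod_mul_distrib]

lemma IsBoundedCylinder.abs_le_one {F : (R → Fin k → Bool) → ℝ} (hF : IsBoundedCylinder F)
    (x : R → Fin k → Bool) : |F x| ≤ 1 := by
  obtain ⟨f, hf, -, hfF⟩ := hF
  rw [hfF, abs_prod]
  exact prod_le_one (fun _ _ => abs_nonneg _) fun j _ => hf j x

lemma IsBoundedCylinder.eq_of_one_column {F : (R → Fin 1 → Bool) → ℝ} (hF : IsBoundedCylinder F)
    (x y : R → Fin 1 → Bool) : F x = F y := by
  obtain ⟨f, -, hfi, hfF⟩ := hF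
  simp only [hfF, Fin.prod_univ_one]
  exact hfi 0 x y fun r i hi => absurd (Subsingleton.elim i 0) hi

lemma IsBoundedCylinder.comp_piecewise [DecidableEq R] {F : (R → Fin k → Bool) → ℝ}
    (hF : IsBoundedCylinder F) (S : Finset R) (y : R → Fin k → Bool) :
    IsBoundedCylinder fun x => F (S.piecewise y x) := by
  obtain ⟨f, hf, hfi, hfF⟩ := hF
  refine ⟨fun j x => f j (S.piecewise y x), fun j x => hf j _, fun j x x' h => ?_, fun x => hfF _⟩
  refine hfi j _ _ fun r i hi => ?_
  by_cases hr : r ∈ S <;> simp [hr, h r i hi]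

/-- The matrix `x` with the column `z` added in front. -/
def consColumn (z : R → Bool) (x : R → Fin k → Bool) : R → Fin (k + 1) → Bool :=
  fun r => Fin.cons (z r) (x r)

lemma expect_consColumn [Fintype R] [DecidableEq R] (G : (R → Fin (k + 1) → Bool) → ℝ) :
    𝔼 x, G x = 𝔼 x, 𝔼 z, G (consColumn z x) := by
  let e : (R → Fin (k + 1) → Bool) ≃ (R → Fin k → Bool) × (R → Bool) :=
    (Equiv.arrowCongr (Equiv.refl R) (Fin.consEquiv fun _ => Bool).symm).trans
      ((Equiv.arrowProdEquivProdArrow R _ _).trans (Equiv.prodComm _ _))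
  rw [Fintype.expect_equiv e G (fun q => G (consColumn q.2 q.1)) fun x => congr_arg G ?_]
  · exact expect_product univ univ fun q : (R → Fin k → Bool) × (R → Bool) => G (consColumn q.2 q.1)
  · ext r i
    exact (congr_fun (Fin.cons_self_tail (x r)) i).symm

/- The factor that ignores the first column becomes a bounded function `g` of the remaining ones. -/
lemma IsBoundedCylinder.exists_consColumn {F : (R → Fin (k + 1) → Bool) → ℝ}
    (hF : IsBoundedCylinder F) :
    ∃ (g : (R → Fin k → Bool) → ℝ) (H : (R → Bool) → (R → Fin k → Bool) → ℝ),
      (∀ x, |g x| ≤ 1) ∧ (∀ z, IsBoundedCylinder (H z)) ∧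
        ∀ z x, F (consColumn z x) = g x * H z x := by
  obtain ⟨f, hf, hfi, hfF⟩ := hF
  refine ⟨fun x => f 0 (consColumn (fun _ => false) x),
    fun z x => ∏ j : Fin k, f j.succ (consColumn z x), fun x => hf 0 _, fun z => ?_, fun z x => ?_⟩
  · refine ⟨fun j x => f j.succ (consColumn z x), fun j x => hf _ _, fun j x y h => ?_,
      fun _ => rfl⟩
    refine hfi j.succ _ _ fun r i hi => ?_
    cases i using Fin.cases with
    | zero => rfl
    | succ i => exact h r i fun hij => hi (hij ▸ rfl)
  · rw [hfF, Fin.prod_univ_succ]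
    congr 1
    refine hfi 0 _ _ fun r i hi => ?_
    cases i using Fin.cases with
    | zero => exact absurd rfl hi
    | succ i => rfl

end Cylinders

section Blocks

variable {R : Type*} {p : ℕ}

/-- The rows in `S` all of whose entries are ones, except possibly that in the last column. -/
def fullRows (S : Finset R) (x : R → Fin (p + 1) → Bool) : Finset R :=
  {r ∈ S | ∀ j : Fin p, x r j.castSucc = true}

/-- The row of length `p + 1` with entry `b` in the last column and ones elsewhere. -/
def endRow (p : ℕ) (b : Bool) : Fin (p + 1) → Bool :=
  Fin.snoc (fun _ => true) b

/-- The sign `(-1)^b` of the entry `b` in the last column of row `r`. -/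
def lastSign (x : R → Fin (p + 1) → Bool) (r : R) : ℝ :=
  if x r (Fin.last p) then -1 else 1

/-- The value `s r` if `U = {r}` is a singleton, and zero otherwise. -/
def loneValue (U : Finset R) (s : R → ℝ) : ℝ :=
  if #U = 1 then ∏ r ∈ U, s r else 0

/-- The sign of the last entry of the unique row in `S` that is full up to its last entry, and zero
if there is no such row or more than one. -/
def blockSign (S : Finset R) (x : R → Fin (p + 1) → Bool) : ℝ :=
  loneValue (fullRows S x) (lastSign x)

/-- The probability that a uniformly random Boolean vector of length `p` has an entry zero. -/
noncomputable def missProb (p : ℕ) : ℝ := 1 - (2 ^ p)⁻¹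

/-- The bound on the correlation of `blockSign S` with cylinder intersections. -/
noncomputable def blockBound (p : ℕ) (S : Finset R) : ℝ := √(#S : ℝ) * missProb p ^ #S

lemma missProb_nonneg (p : ℕ) : 0 ≤ missProb p :=
  sub_nonneg.2 (inv_le_one_of_one_le₀ (one_le_pow₀ one_le_two))

lemma missProb_lt_one (p : ℕ) : missProb p < 1 :=
  sub_lt_self _ (by positivity)

lemma missProb_succ (p : ℕ) : missProb (p + 1) = (1 + missProb p) / 2 := by
  rw [missProb, missProb, pow_succ, mul_inv]; ring

lemma two_pow_sub_one_mul_one_sub_missProb (p : ℕ) :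
    (2 ^ p - 1) * (1 - missProb p) = missProb p := by
  rw [missProb]
  field_simp
  ring

lemma blockBound_nonneg (p : ℕ) (S : Finset R) : 0 ≤ blockBound p S :=
  mul_nonneg (Real.sqrt_nonneg _) (pow_nonneg (missProb_nonneg p) _)

lemma forall_castSucc_eq_true_iff (a : Fin (p + 1) → Bool) :
    (∀ j : Fin p, a j.castSucc = true) ↔ a = endRow p true ∨ a = endRow p false := by
  simp only [endRow, funext_iff, Fin.forall_fin_succ', Fin.snoc_castSucc, Fin.snoc_last]
  cases a (Fin.last p) <;> simp

lemma endRow_true_ne_endRow_false (p : ℕ) : endRow p true ≠ endRow p false := fun h => by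
  simpa [endRow] using congr_fun h (Fin.last p)

lemma ite_forall_castSucc_eq_true (a : Fin (p + 1) → Bool) :
    (if ∀ j : Fin p, a j.castSucc = true then (1 : ℝ) else 0) =
      (if a = endRow p true then 1 else 0) + if a = endRow p false then 1 else 0 := by
  rw [if_congr (forall_castSucc_eq_true_iff a) rfl rfl]
  by_cases h : a = endRow p true
  · simp [h, endRow_true_ne_endRow_false p]
  · simp [h]

lemma loneValue_union [DecidableEq R] {U V : Finset R} (hUV : Disjoint U V) (s : R → ℝ) :
    loneValue (U ∪ V) s = 0 ^ #U * loneValue V s + loneValue U s * 0 ^ #V := by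
  rcases U.eq_empty_or_nonempty with rfl | hU
  · rcases V.eq_empty_or_nonempty with rfl | hV
    · simp [loneValue]
    · simp [loneValue, hV.card_pos.ne']
  · rcases V.eq_empty_or_nonempty with rfl | hV
    · simp [loneValue, hU.card_pos.ne']
    · have := hU.card_pos
      have := hV.card_pos
      simp [loneValue, card_union_of_disjoint hUV, hU.ne_empty, hV.ne_empty,
        show #U + #V ≠ 1 by lia]

lemma two_pow_card_mul_loneValue (U : Finset R) (s : R → ℝ) :
    2 ^ #U * loneValue U s = 2 * loneValue U s := by
  unfold loneValue
  split_ifs with h <;> simp [h]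

lemma zero_pow_card_mul_loneValue (U : Finset R) (s : R → ℝ) : 0 ^ #U * loneValue U s = 0 := by
  unfold loneValue
  split_ifs with h <;> simp [h]

lemma loneValue_sq (U : Finset R) {s : R → ℝ} (hs : ∀ r, s r ^ 2 = 1) :
    loneValue U s ^ 2 = if #U = 1 then 1 else 0 := by
  unfold loneValue
  split_ifs
  · rw [← prod_pow, prod_congr rfl fun r _ => hs r, prod_const_one]
  · norm_num

lemma lastSign_sq (x : R → Fin (p + 1) → Bool) (r : R) : lastSign x r ^ 2 = 1 := by
  unfold lastSign
  split_ifs <;> norm_num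

lemma blockSign_empty (x : R → Fin (p + 1) → Bool) : blockSign ∅ x = 0 := by
  simp [blockSign, loneValue, fullRows]

lemma fullRows_consColumn (S : Finset R) (z : R → Bool) (x : R → Fin (p + 1) → Bool) :
    fullRows S (consColumn z x) = fullRows {r ∈ S | z r} x := by
  ext r
  simp only [fullRows, mem_filter, Fin.forall_fin_succ, and_assoc]
  rfl

lemma lastSign_consColumn (z : R → Bool) (x : R → Fin (p + 1) → Bool) :
    lastSign (consColumn z x) = lastSign x := rfl

lemma fullRows_congr {S : Finset R} {x y : R → Fin (p + 1) → Bool} (h : ∀ r ∈ S, x r = y r) :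
    fullRows S x = fullRows S y :=
  filter_congr fun r hr => by rw [h r hr]

lemma dependsOn_blockSign (S : Finset R) :
    DependsOn (blockSign (p := p) S) (S : Set R) := fun x y h => by
  have hlast : ∀ r ∈ fullRows S y, lastSign x r = lastSign y r := fun r hr => by
    rw [lastSign, lastSign, h r (mem_filter.1 hr).1]
  rw [blockSign, blockSign, fullRows_congr h, loneValue, loneValue, prod_congr rfl hlast]

lemma expect_ite {α : Type*} [Fintype α] [Nonempty α] (P : α → Prop) [DecidablePred P] (s t : ℝ) :
    (𝔼 a, if P a then s else t) = t + (s - t) * 𝔼 a, if P a then 1 else 0 := by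
  have affine (a : α) : (if P a then s else t) = t + (s - t) * if P a then 1 else 0 := by
    split_ifs <;> ring
  simp only [affine, expect_add_distrib, ← mul_expect, Fintype.expect_const]

lemma expect_ite_eq (v : Fin p → Bool) :
    (𝔼 a, if a = v then (1 : ℝ) else 0) = 1 - missProb p := by
  simp [missProb]

lemma expect_forall_castSucc_eq_true (p : ℕ) :
    (𝔼 a : Fin (p + 1) → Bool, if ∀ j : Fin p, a j.castSucc = true then (1 : ℝ) else 0) =
      1 - missProb p := by
  simp only [ite_forall_castSucc_eq_true, expect_add_distrib, expect_ite_eq, missProb_succ]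
  ring

lemma expect_pow_card_fullRows [Fintype R] [DecidableEq R] (S : Finset R) (t : ℝ) :
    𝔼 x : R → Fin (p + 1) → Bool, t ^ #(fullRows S x) =
      (1 + (t - 1) * (1 - missProb p)) ^ #S := by
  rw [← expect_forall_castSucc_eq_true, ← expect_ite]
  exact expect_pow_card_filter S (fun a : Fin (p + 1) → Bool => ∀ j : Fin p, a j.castSucc = true) t

lemma expect_card_fullRows_eq_one [Fintype R] [DecidableEq R] (S : Finset R) :
    (𝔼 x : R → Fin (p + 1) → Bool, if #(fullRows S x) = 1 then (1 : ℝ) else 0) =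
      #S * (1 - missProb p) * missProb p ^ (#S - 1) := by
  have h := expect_card_filter_eq_one S
    fun a : Fin (p + 1) → Bool => ∀ j : Fin p, a j.castSucc = true
  rw [expect_ite _ 0 1, expect_forall_castSucc_eq_true] at h
  refine h.trans ?_
  congr 2
  ring

end Blocks

section Multipliers

variable {R ι : Type*} [Fintype R] [DecidableEq R] {p : ℕ}

/-- `h` is a function of the rows in `T`, and multiplying it by the block signs of disjoint blocks
outside `T` and by a cylinder intersection yields an expectation of at most `c` times the product of
the bounds of the blocks. The blocks are part of the notion so that blocks can be moved, one at a
time, from the product into `h`. -/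
def CylinderBound (T : Finset R) (h : (R → Fin (p + 1) → Bool) → ℝ) (c : ℝ) : Prop :=
  DependsOn h (T : Set R) ∧
  ∀ 𝒮 : Finset (Finset R), (𝒮 : Set (Finset R)).PairwiseDisjoint id → (∀ S ∈ 𝒮, Disjoint S T) →
    ∀ F : (R → Fin (p + 1) → Bool) → ℝ, IsBoundedCylinder F →
      |𝔼 x, h x * (∏ S ∈ 𝒮, blockSign S x) * F x| ≤ c * ∏ S ∈ 𝒮, blockBound p S

/-- Multiplication by `g`, a function of the rows in `S`, increases cylinder bounds by at most the
factor `C`. -/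
def IsMultiplier (S : Finset R) (g : (R → Fin (p + 1) → Bool) → ℝ) (C : ℝ) : Prop :=
  ∀ T h c, Disjoint S T → CylinderBound T h c → CylinderBound (S ∪ T) (fun x => g x * h x) (C * c)

lemma CylinderBound.mono {T T' : Finset R} {h : (R → Fin (p + 1) → Bool) → ℝ} {c c' : ℝ}
    (hh : CylinderBound T h c) (hT : T ⊆ T') (hc : c ≤ c') : CylinderBound T' h c' :=
  ⟨hh.1.mono (coe_subset.2 hT), fun 𝒮 hpd hdisj F hF =>
    (hh.2 𝒮 hpd (fun S hS => (hdisj S hS).mono_right hT) F hF).trans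
      (mul_le_mul_of_nonneg_right hc (prod_nonneg fun S _ => blockBound_nonneg p S))⟩

lemma CylinderBound.nonneg {T : Finset R} {h : (R → Fin (p + 1) → Bool) → ℝ} {c : ℝ}
    (hh : CylinderBound T h c) : 0 ≤ c :=
  (abs_nonneg _).trans (by simpa using hh.2 ∅ (by simp) (by simp) _ isBoundedCylinder_one)

lemma CylinderBound.add {T : Finset R} {h h' : (R → Fin (p + 1) → Bool) → ℝ} {c c' : ℝ}
    (hh : CylinderBound T h c) (hh' : CylinderBound T h' c') :
    CylinderBound T (fun x => h x + h' x) (c + c') := by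
  refine ⟨fun x y hxy => congr_arg₂ (· + ·) (hh.1 hxy) (hh'.1 hxy), fun 𝒮 hpd hdisj F hF => ?_⟩
  simp only [add_mul, expect_add_distrib]
  exact (abs_add_le _ _).trans (add_le_add (hh.2 𝒮 hpd hdisj F hF) (hh'.2 𝒮 hpd hdisj F hF))

lemma IsMultiplier.mono {S S' : Finset R} {g : (R → Fin (p + 1) → Bool) → ℝ} {C C' : ℝ}
    (hg : IsMultiplier S g C) (hS : S ⊆ S') (hC : C ≤ C') : IsMultiplier S' g C' :=
  fun T h c hdisj hh => (hg T h c (hdisj.mono_left hS) hh).mono (union_subset_union_left hS)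
    (mul_le_mul_of_nonneg_right hC hh.nonneg)

lemma IsMultiplier.add {S : Finset R} {g g' : (R → Fin (p + 1) → Bool) → ℝ} {C C' : ℝ}
    (hg : IsMultiplier S g C) (hg' : IsMultiplier S g' C') :
    IsMultiplier S (fun x => g x + g' x) (C + C') := fun T h c hdisj hh => by
  simpa only [add_mul] using (hg T h c hdisj hh).add (hg' T h c hdisj hh)

lemma IsMultiplier.mul {S S' : Finset R} {g g' : (R → Fin (p + 1) → Bool) → ℝ} {C C' : ℝ}
    (hg : IsMultiplier S g C) (hg' : IsMultiplier S' g' C') (hS : Disjoint S S') :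
    IsMultiplier (S ∪ S') (fun x => g x * g' x) (C * C') := fun T h c hdisj hh => by
  rw [disjoint_union_left] at hdisj
  simpa only [union_assoc, mul_assoc] using
    hg _ _ _ (disjoint_union_right.2 ⟨hS, hdisj.1⟩) (hg' T h c hdisj.2 hh)

/- Resample the rows in `S` independently: for fixed values of the rows in `S`, the function `F` is
still a cylinder intersection in the remaining ones. -/
lemma isMultiplier_of_dependsOn {S : Finset R} {w : (R → Fin (p + 1) → Bool) → ℝ}
    (hw : DependsOn w (S : Set R)) : IsMultiplier S w (𝔼 x, |w x|) := by
  intro T h c hdisj hh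
  refine ⟨dependsOn_mul hw hh.1, fun 𝒮 hpd h𝒮 F hF => ?_⟩
  let Φ : (R → Fin (p + 1) → Bool) → ℝ := fun x => ∏ B ∈ 𝒮, blockSign B x
  simp only [disjoint_union_right] at h𝒮
  have outside (B : Finset R) (hB : Disjoint B S) (y x : R → Fin (p + 1) → Bool) :
      ∀ r ∈ B, S.piecewise y x r = x r := fun r hr =>
    S.piecewise_eq_of_notMem y x (disjoint_left.1 hB hr)
  have resample (y x : R → Fin (p + 1) → Bool) :
      w (S.piecewise y x) * h (S.piecewise y x) * Φ (S.piecewise y x) * F (S.piecewise y x) =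
        w y * (h x * Φ x * F (S.piecewise y x)) := by
    rw [hw fun r hr => S.piecewise_eq_of_mem y x hr, hh.1 (outside T hdisj.symm y x),
      show Φ (S.piecewise y x) = Φ x from prod_congr rfl fun B hB =>
        dependsOn_blockSign B (outside B (h𝒮 B hB).1 y x)]
    ring
  calc |𝔼 x, w x * h x * Φ x * F x|
      = |𝔼 y, w y * 𝔼 x, h x * Φ x * F (S.piecewise y x)| := by
        rw [← expect_piecewise S]
        simp only [resample, ← mul_expect]
    _ ≤ 𝔼 y, |w y| * (c * ∏ B ∈ 𝒮, blockBound p B) := by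
        refine (abs_expect_le _ _).trans (expect_le_expect fun y _ => ?_)
        rw [abs_mul]
        exact mul_le_mul_of_nonneg_left
          (hh.2 𝒮 hpd (fun B hB => (h𝒮 B hB).2) _ (hF.comp_piecewise S y)) (abs_nonneg _)
    _ = (𝔼 y, |w y|) * c * ∏ B ∈ 𝒮, blockBound p B := by rw [← expect_mul, mul_assoc]

lemma isMultiplier_const (a : ℝ) :
    IsMultiplier (∅ : Finset R) (fun _ : R → Fin (p + 1) → Bool => a) |a| := by
  simpa using isMultiplier_of_dependsOn (S := (∅ : Finset R)) (p := p) (w := fun _ => a)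
    fun _ _ _ => rfl

lemma IsMultiplier.const_mul {S : Finset R} {g : (R → Fin (p + 1) → Bool) → ℝ} {C : ℝ}
    (hg : IsMultiplier S g C) (a : ℝ) : IsMultiplier S (fun x => a * g x) (|a| * C) := by
  simpa only [empty_union] using (isMultiplier_const a).mul hg (disjoint_empty_left S)

lemma isMultiplier_blockSign (S : Finset R) :
    IsMultiplier S (blockSign (p := p) S) (blockBound p S) := by
  intro T h c hdisj hh
  refine ⟨dependsOn_mul (dependsOn_blockSign S) hh.1, fun 𝒮 hpd h𝒮 F hF => ?_⟩
  simp only [disjoint_union_right] at h𝒮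
  by_cases hS : S ∈ 𝒮
  · obtain rfl : S = ∅ := disjoint_self.1 (h𝒮 S hS).1
    simp [blockSign_empty, blockBound]
  have hpd' : ((insert S 𝒮 : Finset (Finset R)) : Set (Finset R)).PairwiseDisjoint id := by
    rw [coe_insert]
    exact hpd.insert fun B hB _ => (h𝒮 B hB).1.symm
  have key := hh.2 (insert S 𝒮) hpd'
    (forall_mem_insert _ _ _ |>.2 ⟨hdisj, fun B hB => (h𝒮 B hB).2⟩) F hF
  simp only [prod_insert hS] at key
  convert key using 1
  · congr 1; exact expect_congr rfl fun x _ => by ring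
  · ring

lemma isMultiplier_prod {s : Finset ι} {S : ι → Finset R} (hS : (s : Set ι).PairwiseDisjoint S)
    {g : ι → (R → Fin (p + 1) → Bool) → ℝ} {C : ι → ℝ}
    (hg : ∀ i ∈ s, IsMultiplier (S i) (g i) (C i)) :
    IsMultiplier (s.biUnion S) (fun x => ∏ i ∈ s, g i x) (∏ i ∈ s, C i) := by
  classical
  induction s using Finset.induction_on with
  | empty => simpa using isMultiplier_const (R := R) (p := p) 1
  | insert i s hi ih =>
    rw [coe_insert, Set.pairwiseDisjoint_insert_of_notMem (by simpa using hi)] at hS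
    rw [forall_mem_insert] at hg
    simp only [prod_insert hi, biUnion_insert]
    exact hg.1.mul (ih hS.1 hg.2) ((disjoint_biUnion_right _ _ _).2 hS.2)

lemma isMultiplier_sum {S : Finset R} (s : Finset ι) {g : ι → (R → Fin (p + 1) → Bool) → ℝ}
    {C : ι → ℝ} (hg : ∀ i ∈ s, IsMultiplier S (g i) (C i)) :
    IsMultiplier S (fun x => ∑ i ∈ s, g i x) (∑ i ∈ s, C i) := by
  classical
  induction s using Finset.induction_on with
  | empty => simpa using (isMultiplier_const (R := R) (p := p) 0).mono (empty_subset S) le_rfl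
  | insert i s hi ih =>
    rw [forall_mem_insert] at hg
    simp only [sum_insert hi]
    exact hg.1.add (ih hg.2)

lemma IsMultiplier.abs_expect_le {S : Finset R} {g : (R → Fin (p + 1) → Bool) → ℝ} {C : ℝ}
    (hg : IsMultiplier S g C)
    (hone : CylinderBound (∅ : Finset R) (fun _ : R → Fin (p + 1) → Bool => 1) 1)
    {F : (R → Fin (p + 1) → Bool) → ℝ} (hF : IsBoundedCylinder F) : |𝔼 x, g x * F x| ≤ C := by
  simpa using (hg ∅ _ 1 (disjoint_empty_right S) hone).2 ∅ (by simp) (by simp) F hF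

lemma isMultiplier_pow_card_fullRows (S : Finset R) {t : ℝ} (ht : 0 ≤ t) :
    IsMultiplier S (fun x : R → Fin (p + 1) → Bool => t ^ #(fullRows S x))
      ((1 + (t - 1) * (1 - missProb p)) ^ #S) := by
  rw [← expect_pow_card_fullRows]
  simpa only [abs_of_nonneg (pow_nonneg ht _)] using
    isMultiplier_of_dependsOn (S := S) (w := fun x : R → Fin (p + 1) → Bool => t ^ #(fullRows S x))
      fun _ _ h => congr_arg (fun U => t ^ #U) (fullRows_congr h)

lemma isMultiplier_card_fullRows_eq_one (S : Finset R) :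
    IsMultiplier S (fun x : R → Fin (p + 1) → Bool => if #(fullRows S x) = 1 then 1 else 0)
      (#S * (1 - missProb p) * missProb p ^ (#S - 1)) := by
  rw [← expect_card_fullRows_eq_one]
  simpa only [apply_ite abs, abs_one, abs_zero] using isMultiplier_of_dependsOn (S := S)
    (w := fun x : R → Fin (p + 1) → Bool => if #(fullRows S x) = 1 then (1 : ℝ) else 0)
      fun _ _ h => congr_arg (fun U => if #U = 1 then (1 : ℝ) else 0) (fullRows_congr h)

end Multipliers

section Kernel

variable {R : Type*} {p : ℕ}

/-- The contribution of the block `S` after squaring: its sign for two values `ζ.1`, `ζ.2` of the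
first column, weighted by the reciprocal of the Cauchy–Schwarz weight `2 ^ (-#(fullRows S x))`. -/
def blockKernel (S : Finset R) (ζ : R → Bool × Bool) (x : R → Fin (p + 1) → Bool) : ℝ :=
  2 ^ #(fullRows S x) *
    (blockSign S (consColumn (fun r => (ζ r).1) x) * blockSign S (consColumn (fun r => (ζ r).2) x))

/-- The rows in `S` in which the two values of the first column form the pair `c`. -/
def cell (S : Finset R) (ζ : R → Bool × Bool) (c : Bool × Bool) : Finset R :=
  {r ∈ S | ζ r = c}

lemma disjoint_cell (S : Finset R) (ζ : R → Bool × Bool) {c d : Bool × Bool} (hcd : c ≠ d) :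
    Disjoint (cell S ζ c) (cell S ζ d) :=
  disjoint_filter.2 fun _ _ hc hd => hcd (hc.symm.trans hd)

lemma card_fullRows_eq_sum_cell (S : Finset R) (ζ : R → Bool × Bool) (x : R → Fin (p + 1) → Bool) :
    #(fullRows S x) = ∑ c, #(fullRows (cell S ζ c) x) := by
  rw [card_eq_sum_card_fiberwise (f := ζ) (t := univ) fun _ _ => mem_coe.2 (mem_univ _)]
  simp only [fullRows, cell, filter_filter, and_comm]

/-- The factor in the bound on a block kernel due to a row which has the given pair in its first
column and does not contribute the sign. -/
noncomputable def cellFactor (p : ℕ) : Bool × Bool → ℝ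
  | (false, false) => 2 - missProb p
  | _ => missProb p

/-- The analogue of `cellFactor` for the row contributing the sign. -/
noncomputable def cellSignFactor (p : ℕ) : Bool × Bool → ℝ
  | (false, false) => 0
  | (true, true) => 2 * (1 - missProb p)
  | _ => 2 * missProb p

lemma prod_cellFactor (S : Finset R) (ζ : R → Bool × Bool) :
    ∏ r ∈ S, cellFactor p (ζ r) =
      (2 - missProb p) ^ #(cell S ζ (false, false)) * missProb p ^ #(cell S ζ (true, true)) *
        (missProb p ^ #(cell S ζ (true, false)) * missProb p ^ #(cell S ζ (false, true))) := by
  have on_cell (c : Bool × Bool) :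
      ∏ r ∈ S with ζ r = c, cellFactor p (ζ r) = cellFactor p c ^ #(cell S ζ c) :=
    (prod_congr rfl fun r hr => by rw [(mem_filter.1 hr).2]).trans (prod_const _)
  rw [← prod_fiberwise S ζ, prod_congr rfl fun c _ => on_cell c, Fintype.prod_prod_type]
  simp only [Fintype.prod_bool, cellFactor]
  ring

lemma expect_cellFactor : 𝔼 c, cellFactor p c = missProb (p + 1) := by
  simp only [Fintype.expect_eq_sum_div_card, Fintype.sum_prod_type, Fintype.sum_bool,
    Fintype.card_prod, Fintype.card_bool, cellFactor, missProb_succ]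
  push_cast
  ring

lemma expect_cellSignFactor : 𝔼 c, cellSignFactor p c = missProb (p + 1) := by
  simp only [Fintype.expect_eq_sum_div_card, Fintype.sum_prod_type, Fintype.sum_bool,
    Fintype.card_prod, Fintype.card_bool, cellSignFactor, missProb_succ]
  push_cast
  ring

lemma card_mul_missProb_pow (S : Finset R) :
    #S * missProb p * missProb p ^ (#S - 1) = #S * missProb p ^ #S := by
  rcases S.eq_empty_or_nonempty with rfl | hS
  · simp
  · rw [mul_assoc, mul_pow_sub_one hS.card_pos.ne']

lemma blockSign_consColumn_of_filter_eq_union [DecidableEq R] {S A B : Finset R}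
    (hAB : Disjoint A B) {z : R → Bool} (hz : {r ∈ S | z r} = A ∪ B) (x : R → Fin (p + 1) → Bool) :
    blockSign S (consColumn z x) =
      0 ^ #(fullRows A x) * blockSign B x + blockSign A x * 0 ^ #(fullRows B x) := by
  have hfull : fullRows S (consColumn z x) = fullRows A x ∪ fullRows B x := by
    rw [fullRows_consColumn, hz]
    exact filter_union _ A B
  rw [blockSign, hfull, lastSign_consColumn]
  exact loneValue_union (disjoint_filter_filter hAB) (lastSign x)

lemma blockSign_consColumn_fst (S : Finset R) (ζ : R → Bool × Bool) (x : R → Fin (p + 1) → Bool) :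
    blockSign S (consColumn (fun r => (ζ r).1) x) =
      0 ^ #(fullRows (cell S ζ (true, false)) x) * blockSign (cell S ζ (true, true)) x +
        blockSign (cell S ζ (true, false)) x * 0 ^ #(fullRows (cell S ζ (true, true)) x) := by
  classical
  refine blockSign_consColumn_of_filter_eq_union (disjoint_cell S ζ (by simp)) ?_ x
  ext r
  simp only [cell, mem_filter, mem_union, Prod.ext_iff]
  grind

lemma blockSign_consColumn_snd (S : Finset R) (ζ : R → Bool × Bool) (x : R → Fin (p + 1) → Bool) :
    blockSign S (consColumn (fun r => (ζ r).2) x) =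
      0 ^ #(fullRows (cell S ζ (false, true)) x) * blockSign (cell S ζ (true, true)) x +
        blockSign (cell S ζ (false, true)) x * 0 ^ #(fullRows (cell S ζ (true, true)) x) := by
  classical
  refine blockSign_consColumn_of_filter_eq_union (disjoint_cell S ζ (by simp)) ?_ x
  ext r
  simp only [cell, mem_filter, mem_union, Prod.ext_iff]
  grind

/- If the product of the two signs is nonzero, then either one full row has the pair `(1, 1)` and
none has `(1, 0)` or `(0, 1)`, or one full row has `(1, 0)`, one has `(0, 1)` and none has
`(1, 1)`. -/
lemma blockKernel_eq (S : Finset R) (ζ : R → Bool × Bool) (x : R → Fin (p + 1) → Bool) :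
    blockKernel S ζ x = 2 ^ #(fullRows (cell S ζ (false, false)) x) *
      (4 * (0 ^ #(fullRows (cell S ζ (true, true)) x) *
          (blockSign (cell S ζ (true, false)) x * blockSign (cell S ζ (false, true)) x)) +
        2 * ((if #(fullRows (cell S ζ (true, true)) x) = 1 then 1 else 0) *
          (0 ^ #(fullRows (cell S ζ (true, false)) x) *
            0 ^ #(fullRows (cell S ζ (false, true)) x)))) := by
  have two_pow_mul_zero_pow (n : ℕ) : (2 : ℝ) ^ n * 0 ^ n = 0 ^ n := by rw [← mul_pow, mul_zero]
  set u := fun c => #(fullRows (cell S ζ c) x) with hu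
  set t := fun c => blockSign (cell S ζ c) x
  have hcard : (2 : ℝ) ^ #(fullRows S x) =
      2 ^ u (true, true) * 2 ^ u (true, false) * (2 ^ u (false, true) * 2 ^ u (false, false)) := by
    rw [card_fullRows_eq_sum_cell S ζ, ← prod_pow_eq_pow_sum, Fintype.prod_prod_type]
    simp only [Fintype.prod_bool, hu]
  have two_pow_mul (c : Bool × Bool) : 2 ^ u c * t c = 2 * t c :=
    two_pow_card_mul_loneValue _ (lastSign x)
  have zero_pow_mul (c : Bool × Bool) : 0 ^ u c * t c = 0 :=
    zero_pow_card_mul_loneValue _ (lastSign x)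
  have t_sq (c : Bool × Bool) : t c ^ 2 = if u c = 1 then 1 else 0 :=
    loneValue_sq _ (lastSign_sq x)
  calc blockKernel S ζ x
      = 2 ^ u (false, false) *
          (2 ^ u (true, true) * t (true, true) * t (true, true) *
              (2 ^ u (true, false) * 0 ^ u (true, false) *
                (2 ^ u (false, true) * 0 ^ u (false, true))) +
            2 ^ u (true, true) * 2 ^ u (true, false) * 2 ^ u (false, true) *
              (0 ^ u (true, false) * t (false, true) + t (true, false) * 0 ^ u (false, true)) *
              (0 ^ u (true, true) * t (true, true)) +
            2 ^ u (true, true) * 0 ^ u (true, true) * 0 ^ u (true, true) *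
              (2 ^ u (true, false) * t (true, false) *
                (2 ^ u (false, true) * t (false, true)))) := by
        rw [blockKernel, hcard, blockSign_consColumn_fst, blockSign_consColumn_snd]; ring
    _ = _ := by
        rw [two_pow_mul, two_pow_mul, two_pow_mul, zero_pow_mul, two_pow_mul_zero_pow,
          two_pow_mul_zero_pow, two_pow_mul_zero_pow, ← mul_pow, mul_zero, ← t_sq]
        ring

variable [DecidableEq R]

lemma cellSignFactor_mul_prod_erase_of_ne {S : Finset R} {ζ : R → Bool × Bool} {r : R} (hr : r ∈ S)
    (hζ : (ζ r).1 ≠ (ζ r).2) :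
    cellSignFactor p (ζ r) * ∏ r' ∈ S.erase r, cellFactor p (ζ r') =
      2 * ∏ r' ∈ S, cellFactor p (ζ r') := by
  have hfactor : cellSignFactor p (ζ r) = 2 * cellFactor p (ζ r) := by
    rcases h : ζ r with ⟨_ | _, _ | _⟩ <;> simp_all [cellSignFactor, cellFactor]
  rw [hfactor, mul_assoc, mul_prod_erase S (fun r => cellFactor p (ζ r)) hr]

lemma cellSignFactor_mul_prod_erase_of_true_true {S : Finset R} {ζ : R → Bool × Bool} {r : R}
    (hr : r ∈ cell S ζ (true, true)) :
    cellSignFactor p (ζ r) * ∏ r' ∈ S.erase r, cellFactor p (ζ r') =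
      2 * ((1 - missProb p) * missProb p ^ (#(cell S ζ (true, true)) - 1) *
        ((2 - missProb p) ^ #(cell S ζ (false, false)) *
          (missProb p ^ #(cell S ζ (true, false)) * missProb p ^ #(cell S ζ (false, true))))) := by
  have hζ : ζ r = (true, true) := (mem_filter.1 hr).2
  have cell_erase (c : Bool × Bool) : cell (S.erase r) ζ c = (cell S ζ c).erase r :=
    filter_erase _ r S
  have cell_erase_of_ne {c : Bool × Bool} (hc : c ≠ (true, true)) :
      cell (S.erase r) ζ c = cell S ζ c := by
    rw [cell_erase, erase_eq_of_notMem]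
    exact fun h => hc ((mem_filter.1 h).2.symm.trans hζ)
  rw [prod_cellFactor, cell_erase (true, true), card_erase_of_mem hr, cell_erase_of_ne (by simp),
    cell_erase_of_ne (by simp), cell_erase_of_ne (by simp), hζ, cellSignFactor]
  ring

lemma sum_cellSignFactor_mul_prod_erase (S : Finset R) (ζ : R → Bool × Bool) :
    ∑ r ∈ S, cellSignFactor p (ζ r) * ∏ r' ∈ S.erase r, cellFactor p (ζ r') =
      2 * (#(cell S ζ (true, false)) + #(cell S ζ (false, true))) *
          ∏ r ∈ S, cellFactor p (ζ r) +
        2 * (#(cell S ζ (true, true)) * (1 - missProb p) *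
          missProb p ^ (#(cell S ζ (true, true)) - 1)) *
          ((2 - missProb p) ^ #(cell S ζ (false, false)) *
            (missProb p ^ #(cell S ζ (true, false)) * missProb p ^ #(cell S ζ (false, true)))) := by
  have on_cell {c : Bool × Bool} {v : ℝ} (hv : ∀ r ∈ cell S ζ c,
      cellSignFactor p (ζ r) * ∏ r' ∈ S.erase r, cellFactor p (ζ r') = v) :
      ∑ r ∈ S with ζ r = c, cellSignFactor p (ζ r) * ∏ r' ∈ S.erase r, cellFactor p (ζ r') =
        #(cell S ζ c) * v :=
    (sum_congr rfl hv).trans (by rw [sum_const, nsmul_eq_mul])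
  have on_mixed_cell {c : Bool × Bool} (hc : c.1 ≠ c.2) : ∀ r ∈ cell S ζ c,
      cellSignFactor p (ζ r) * ∏ r' ∈ S.erase r, cellFactor p (ζ r') =
        2 * ∏ r' ∈ S, cellFactor p (ζ r') := fun r hr =>
    cellSignFactor_mul_prod_erase_of_ne (mem_filter.1 hr).1 (by rwa [(mem_filter.1 hr).2])
  rw [← sum_fiberwise S ζ, Fintype.sum_prod_type]
  simp only [Fintype.sum_bool]
  rw [on_cell (c := (true, true)) fun r hr => cellSignFactor_mul_prod_erase_of_true_true hr,
    on_cell (c := (true, false)) (on_mixed_cell (by simp)),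
    on_cell (c := (false, true)) (on_mixed_cell (by simp)),
    on_cell (c := (false, false)) (v := 0) fun r hr => by
      rw [(mem_filter.1 hr).2, cellSignFactor, zero_mul]]
  ring

variable [Fintype R]

lemma isMultiplier_blockKernel (S : Finset R) (ζ : R → Bool × Bool) :
    IsMultiplier S (blockKernel (p := p) S ζ)
      (∑ r ∈ S, cellSignFactor p (ζ r) * ∏ r' ∈ S.erase r, cellFactor p (ζ r')) := by
  have hzero (U : Finset R) :
      IsMultiplier U (fun x : R → Fin (p + 1) → Bool => 0 ^ #(fullRows U x)) (missProb p ^ #U) := by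
    simpa using isMultiplier_pow_card_fullRows (p := p) U le_rfl
  have htwo (U : Finset R) : IsMultiplier U
      (fun x : R → Fin (p + 1) → Bool => 2 ^ #(fullRows U x)) ((2 - missProb p) ^ #U) := by
    convert isMultiplier_pow_card_fullRows (p := p) U zero_le_two using 2
    ring
  have disj {c d : Bool × Bool} (hcd : c ≠ d) := disjoint_cell S ζ hcd
  have hmixed := ((hzero (cell S ζ (true, true))).mul ((isMultiplier_blockSign _).mul
    (isMultiplier_blockSign _) (disj (c := (true, false)) (d := (false, true)) (by simp)))
    (by simp [disjoint_union_right, disj])).const_mul 4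
  have hones := ((isMultiplier_card_fullRows_eq_one (cell S ζ (true, true))).mul
    ((hzero _).mul (hzero _) (disj (c := (true, false)) (d := (false, true)) (by simp)))
    (by simp [disjoint_union_right, disj])).const_mul 2
  have hkernel := (htwo (cell S ζ (false, false))).mul (hmixed.add hones)
    (by simp [disjoint_union_right, disj])
  simp only [← blockKernel_eq] at hkernel
  refine hkernel.mono ?_ ?_
  · simp [cell, union_subset_iff]
  · rw [sum_cellSignFactor_mul_prod_erase, prod_cellFactor]
    have amgm := two_mul_le_add_sq √(#(cell S ζ (true, false)) : ℝ) √(#(cell S ζ (false, true)) : ℝ)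
    rw [Real.sq_sqrt (Nat.cast_nonneg _), Real.sq_sqrt (Nat.cast_nonneg _)] at amgm
    have weight_nonneg : 0 ≤ (2 - missProb p) ^ #(cell S ζ (false, false)) *
        missProb p ^ #(cell S ζ (true, true)) *
        (missProb p ^ #(cell S ζ (true, false)) * missProb p ^ #(cell S ζ (false, true))) := by
      have := missProb_nonneg p
      have := missProb_lt_one p
      have : 0 ≤ 2 - missProb p := by linarith
      positivity
    rw [blockBound, blockBound, abs_of_pos four_pos, abs_of_pos two_pos]
    linear_combination 2 * mul_le_mul_of_nonneg_left amgm weight_nonneg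

end Kernel

section Induction

variable {R : Type*} [Fintype R] [DecidableEq R] {p : ℕ}

lemma expect_blockSign_of_one_column (S : Finset R) :
    𝔼 x : R → Fin 1 → Bool, blockSign S x = 0 := by
  let flip : (R → Fin 1 → Bool) → R → Fin 1 → Bool := fun x r j => !x r j
  have flip_involutive : Function.Involutive flip := fun x => by
    ext r j
    exact Bool.not_not _
  have lastSign_flip (x : R → Fin 1 → Bool) (r : R) : lastSign (flip x) r = -lastSign x r := by
    rw [lastSign, lastSign, show flip x r (Fin.last 0) = !x r (Fin.last 0) from rfl]
    cases x r (Fin.last 0) <;> norm_num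
  have fullRows_flip (x : R → Fin 1 → Bool) : fullRows S (flip x) = fullRows S x :=
    filter_congr fun r _ => by simp only [IsEmpty.forall_iff]
  have blockSign_flip (x : R → Fin 1 → Bool) : -blockSign S x = blockSign S (flip x) := by
    rw [blockSign, blockSign, fullRows_flip, loneValue, loneValue]
    split_ifs with hU
    · rw [prod_congr rfl fun r _ => lastSign_flip x r, prod_neg, hU, pow_one, neg_one_mul]
    · exact neg_zero
  have h := Fintype.expect_bijective flip flip_involutive.bijective _ _ blockSign_flip
  rw [expect_neg_distrib] at h
  linarith

lemma cylinderBound_one_zero :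
    CylinderBound (∅ : Finset R) (fun _ : R → Fin (0 + 1) → Bool => 1) 1 := by
  refine ⟨fun _ _ _ => rfl, fun 𝒮 hpd _ F hF => ?_⟩
  let x₀ : R → Fin 1 → Bool := fun _ _ => false
  have hprod : 𝔼 x : R → Fin 1 → Bool, ∏ S ∈ 𝒮, blockSign S x = ∏ _S ∈ 𝒮, (0 : ℝ) :=
    (expect_prod_of_dependsOn hpd fun S _ => dependsOn_blockSign S).trans
      (prod_congr rfl fun S _ => expect_blockSign_of_one_column S)
  have hconst : 𝔼 x : R → Fin 1 → Bool, 1 * (∏ S ∈ 𝒮, blockSign S x) * F x =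
      (∏ _S ∈ 𝒮, (0 : ℝ)) * F x₀ := by
    simp only [one_mul, hF.eq_of_one_column _ x₀]
    rw [← expect_mul, hprod]
  rw [hconst, abs_mul, one_mul, prod_const, abs_pow, abs_zero, ← prod_const]
  calc (∏ _S ∈ 𝒮, (0 : ℝ)) * |F x₀| ≤ ∏ _S ∈ 𝒮, (0 : ℝ) :=
        mul_le_of_le_one_right (prod_nonneg fun _ _ => le_rfl) (hF.abs_le_one x₀)
    _ ≤ ∏ S ∈ 𝒮, blockBound 0 S := prod_le_prod (fun _ _ => le_rfl) fun S _ => blockBound_nonneg 0 S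

/- Integrating the squares over the remaining columns first reduces the number of columns by one. -/
lemma expect_prod_blockKernel_le
    (hone : CylinderBound (∅ : Finset R) (fun _ : R → Fin (p + 1) → Bool => 1) 1)
    {𝒮 : Finset (Finset R)} (hpd : (𝒮 : Set (Finset R)).PairwiseDisjoint id)
    {H : (R → Bool × Bool) → (R → Fin (p + 1) → Bool) → ℝ} (hH : ∀ ζ, IsBoundedCylinder (H ζ)) :
    𝔼 ζ : R → Bool × Bool, 𝔼 x, (∏ S ∈ 𝒮, blockKernel S ζ x) * H ζ x ≤
      ∏ S ∈ 𝒮, (#S * missProb (p + 1) ^ #S : ℝ) := by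
  let cost (S : Finset R) (ζ : R → Bool × Bool) : ℝ :=
    ∑ r ∈ S, cellSignFactor p (ζ r) * ∏ r' ∈ S.erase r, cellFactor p (ζ r')
  have hcost (S : Finset R) : DependsOn (cost S) (S : Set R) := fun ζ ζ' h =>
    sum_congr rfl fun r hr => by
      rw [h r hr, prod_congr rfl fun r' hr' => by rw [h r' (mem_of_mem_erase hr')]]
  calc 𝔼 ζ, 𝔼 x, (∏ S ∈ 𝒮, blockKernel S ζ x) * H ζ x
      ≤ 𝔼 ζ, ∏ S ∈ 𝒮, cost S ζ := expect_le_expect fun ζ _ => (le_abs_self _).trans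
        ((isMultiplier_prod hpd fun S _ => isMultiplier_blockKernel S ζ).abs_expect_le hone (hH ζ))
    _ = ∏ S ∈ 𝒮, 𝔼 ζ, cost S ζ := expect_prod_of_dependsOn hpd fun S _ => hcost S
    _ = ∏ S ∈ 𝒮, (#S * missProb (p + 1) ^ #S : ℝ) := prod_congr rfl fun S _ => by
        rw [expect_sum_mul_prod_erase, expect_cellFactor, expect_cellSignFactor,
          card_mul_missProb_pow]

lemma expect_prod_half_pow_card_fullRows {𝒮 : Finset (Finset R)}
    (hpd : (𝒮 : Set (Finset R)).PairwiseDisjoint id) :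
    𝔼 x : R → Fin (p + 1) → Bool, ∏ S ∈ 𝒮, (1 / 2 : ℝ) ^ #(fullRows S x) =
      ∏ S ∈ 𝒮, missProb (p + 1) ^ #S := by
  refine (expect_prod_of_dependsOn (S := id) hpd
    (f := fun S (x : R → Fin (p + 1) → Bool) => (1 / 2 : ℝ) ^ #(fullRows S x)) fun S _ x y h =>
    congr_arg (fun U => (1 / 2 : ℝ) ^ #U) (fullRows_congr h)).trans (prod_congr rfl fun S _ => ?_)
  rw [expect_pow_card_fullRows, missProb_succ]
  ring

lemma expect_arrow_prod (G : (R → Bool) → (R → Bool) → ℝ) :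
    𝔼 z, 𝔼 z', G z z' = 𝔼 ζ : R → Bool × Bool, G (fun r => (ζ r).1) fun r => (ζ r).2 :=
  (expect_product univ univ fun q : (R → Bool) × (R → Bool) => G q.1 q.2).symm.trans
    (Fintype.expect_equiv (Equiv.arrowProdEquivProdArrow R _ _) _ _ fun _ => rfl).symm

lemma prod_two_pow_mul_sq_expect (𝒮 : Finset (Finset R)) (x : R → Fin (p + 1) → Bool)
    (H : (R → Bool) → ℝ) :
    (∏ S ∈ 𝒮, (2 : ℝ) ^ #(fullRows S x)) *
        (𝔼 z, (∏ S ∈ 𝒮, blockSign S (consColumn z x)) * H z) ^ 2 =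
      𝔼 ζ : R → Bool × Bool, (∏ S ∈ 𝒮, blockKernel S ζ x) *
        (H (fun r => (ζ r).1) * H fun r => (ζ r).2) := by
  rw [sq, Fintype.expect_mul_expect, expect_arrow_prod, mul_expect]
  refine expect_congr rfl fun ζ _ => ?_
  simp only [blockKernel, prod_mul_distrib]
  ring

lemma expect_prod_blockSign_sq_le
    (hone : CylinderBound (∅ : Finset R) (fun _ : R → Fin (p + 1) → Bool => 1) 1)
    {𝒮 : Finset (Finset R)} (hpd : (𝒮 : Set (Finset R)).PairwiseDisjoint id)
    {F : (R → Fin (p + 1 + 1) → Bool) → ℝ} (hF : IsBoundedCylinder F) :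
    (𝔼 x, (∏ S ∈ 𝒮, blockSign S x) * F x) ^ 2 ≤ ∏ S ∈ 𝒮, blockBound (p + 1) S ^ 2 := by
  obtain ⟨g, H, hg, hH, hFH⟩ := hF.exists_consColumn
  let A (x : R → Fin (p + 1) → Bool) : ℝ :=
    𝔼 z, (∏ S ∈ 𝒮, blockSign S (consColumn z x)) * H z x
  let weight (x : R → Fin (p + 1) → Bool) : ℝ := ∏ S ∈ 𝒮, (1 / 2 : ℝ) ^ #(fullRows S x)
  let weightInv (x : R → Fin (p + 1) → Bool) : ℝ := ∏ S ∈ 𝒮, (2 : ℝ) ^ #(fullRows S x)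
  have hexpect : 𝔼 x, (∏ S ∈ 𝒮, blockSign S x) * F x = 𝔼 x, g x * A x := by
    rw [expect_consColumn]
    refine expect_congr rfl fun x _ => ?_
    rw [mul_expect]
    exact expect_congr rfl fun z _ => by rw [hFH]; ring
  have hweight (x) : (g x * A x) ^ 2 ≤ weight x * (weightInv x * A x ^ 2) := by
    have hinv : weight x * weightInv x = 1 := by
      rw [← prod_mul_distrib]
      exact prod_eq_one fun S _ => by rw [← mul_pow]; norm_num
    rw [← mul_assoc, hinv, mul_pow, one_mul]
    exact mul_le_of_le_one_left (sq_nonneg _) ((sq_le_one_iff_abs_le_one _).2 (hg x))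
  have hsquare : 𝔼 x, weightInv x * A x ^ 2 = 𝔼 ζ : R → Bool × Bool, 𝔼 x,
      (∏ S ∈ 𝒮, blockKernel S ζ x) * (H (fun r => (ζ r).1) x * H (fun r => (ζ r).2) x) := by
    rw [expect_comm]
    exact expect_congr rfl fun x _ => prod_two_pow_mul_sq_expect 𝒮 x fun z => H z x
  calc (𝔼 x, (∏ S ∈ 𝒮, blockSign S x) * F x) ^ 2
      ≤ (𝔼 x, weight x) * 𝔼 x, weightInv x * A x ^ 2 := by
        rw [hexpect]
        exact expect_sq_le_expect_mul_expect (fun x => by positivity) (fun x => by positivity)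
          hweight
    _ ≤ (∏ S ∈ 𝒮, missProb (p + 1) ^ #S) * ∏ S ∈ 𝒮, (#S * missProb (p + 1) ^ #S : ℝ) := by
        rw [expect_prod_half_pow_card_fullRows hpd, hsquare]
        exact mul_le_mul_of_nonneg_left
          (expect_prod_blockKernel_le hone hpd fun ζ => (hH _).mul (hH _))
          (prod_nonneg fun S _ => pow_nonneg (missProb_nonneg _) _)
    _ = ∏ S ∈ 𝒮, blockBound (p + 1) S ^ 2 := by
        rw [← prod_mul_distrib]
        refine prod_congr rfl fun S _ => ?_
        rw [blockBound, mul_pow, Real.sq_sqrt (Nat.cast_nonneg _)]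
        ring

theorem cylinderBound_one (p : ℕ) :
    CylinderBound (∅ : Finset R) (fun _ : R → Fin (p + 1) → Bool => 1) 1 := by
  induction p with
  | zero => exact cylinderBound_one_zero
  | succ p hone =>
    refine ⟨fun _ _ _ => rfl, fun 𝒮 hpd _ F hF => ?_⟩
    simp only [one_mul]
    refine abs_le_of_sq_le_sq ?_ (prod_nonneg fun S _ => blockBound_nonneg _ S)
    rw [← prod_pow]
    exact expect_prod_blockSign_sq_le hone hpd hF

end Induction

section Powerset

variable {R : Type*}

lemma sum_powerset_zero_pow_card (N : Finset R) : ∑ B ∈ N.powerset, (0 : ℝ) ^ #B = 1 := by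
  simpa using sum_pow_mul_eq_add_pow (0 : ℝ) 1 N

lemma sum_powerset_card_mul_pow_mul_pow (S : Finset R) (a b : ℝ) :
    ∑ B ∈ S.powerset, #B * (a ^ #B * b ^ (#S - #B)) = #S * a * (a + b) ^ (#S - 1) := by
  classical
  induction S using Finset.induction_on with
  | empty => simp
  | insert r S hr ih =>
    have card_insert' (B) (hB : B ∈ S.powerset) : #(insert r B) = #B + 1 :=
      card_insert_of_notMem fun h => hr (mem_powerset.1 hB h)
    have without (B) (hB : B ∈ S.powerset) :
        (#B : ℝ) * (a ^ #B * b ^ (#S + 1 - #B)) = b * (#B * (a ^ #B * b ^ (#S - #B))) := by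
      rw [Nat.sub_add_comm (card_le_card (mem_powerset.1 hB)), pow_succ]
      ring
    have with_r (B) (hB : B ∈ S.powerset) :
        (#(insert r B) : ℝ) * (a ^ #(insert r B) * b ^ (#S + 1 - #(insert r B))) =
          a * (#B * (a ^ #B * b ^ (#S - #B))) + a * (a ^ #B * b ^ (#S - #B)) := by
      rw [card_insert' B hB, Nat.add_sub_add_right, pow_succ]
      push_cast
      ring
    rw [sum_powerset_insert hr, card_insert_of_notMem hr, sum_congr rfl without,
      sum_congr rfl with_r, sum_add_distrib, ← mul_sum, ← mul_sum, ← mul_sum,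
      sum_pow_mul_eq_add_pow, ih]
    rcases S.eq_empty_or_nonempty with rfl | hS
    · simp
    rw [add_tsub_cancel_right, ← Nat.sub_add_cancel hS.card_pos, pow_succ]
    push_cast
    ring

lemma sq_sum_powerset_sqrt_card_le (S : Finset R) {a b : ℝ} (ha : 0 ≤ a) (hb : 0 ≤ b) :
    (∑ B ∈ S.powerset, √(#B) * (a ^ #B * b ^ (#S - #B))) ^ 2 ≤
      (a + b) ^ #S * (#S * a * (a + b) ^ (#S - 1)) := by
  rw [← sum_pow_mul_eq_add_pow, ← sum_powerset_card_mul_pow_mul_pow]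
  refine sum_sq_le_sum_mul_sum_of_sq_le_mul _ (fun B _ => by positivity)
    (fun B _ => by positivity) fun B _ => ?_
  rw [mul_pow, Real.sq_sqrt (Nat.cast_nonneg _)]
  exact le_of_eq (by ring)

lemma sum_powerset_comp_sdiff [DecidableEq R] (S : Finset R) (f : Finset R → ℝ) :
    ∑ W ∈ S.powerset, f (S \ W) = ∑ W ∈ S.powerset, f W :=
  sum_nbij' (S \ ·) (S \ ·) (fun _ _ => mem_powerset.2 sdiff_subset)
    (fun _ _ => mem_powerset.2 sdiff_subset)
    (fun _ hW => Finset.sdiff_sdiff_eq_self (mem_powerset.1 hW))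
    (fun _ hW => Finset.sdiff_sdiff_eq_self (mem_powerset.1 hW)) fun _ _ => rfl

end Powerset

section Density

variable {R : Type*} {p : ℕ}

/-- The rows in `S` that have entry `b` in the last column and ones elsewhere. -/
def endRows (b : Bool) (S : Finset R) (x : R → Fin (p + 1) → Bool) : Finset R :=
  {r ∈ S | x r = endRow p b}

/-- The signed density, with respect to the uniform distribution on the Boolean matrices with rows
`S`, of the measure `(σ¹ - σ⁰) / 2`, which is `(-1)^DISJ` times `σ`. -/
noncomputable def disjDensity (S : Finset R) (x : R → Fin (p + 1) → Bool) : ℝ :=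
  ((if #(endRows true S x) = 1 then 1 else 0) /
      (#S * (1 - missProb (p + 1)) * missProb (p + 1) ^ (#S - 1)) -
    0 ^ #(endRows true S x) / missProb (p + 1) ^ #S) / 2

/-- The indicator of the two rows `endRow p b`, scaled and shifted so as to have mean zero over the
rows other than `endRow p true`. -/
noncomputable def rowDeviation (p : ℕ) (a : Fin (p + 1) → Bool) : ℝ :=
  (2 ^ (p + 1) - 1) * (if ∀ j : Fin p, a j.castSucc = true then 1 else 0) - 1

lemma disjoint_endRows (S : Finset R) (x : R → Fin (p + 1) → Bool) :
    Disjoint (endRows true S x) (endRows false S x) :=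
  disjoint_filter.2 fun _ _ ht hf => endRow_true_ne_endRow_false p (ht.symm.trans hf)

lemma lastSign_of_mem_endRows {b : Bool} {S : Finset R} {x : R → Fin (p + 1) → Bool} {r : R}
    (hr : r ∈ endRows b S x) : lastSign x r = if b then -1 else 1 := by
  rw [lastSign, (mem_filter.1 hr).2, endRow, Fin.snoc_last]

lemma endRows_congr {b : Bool} {S : Finset R} {x y : R → Fin (p + 1) → Bool}
    (h : ∀ r ∈ S, x r = y r) : endRows b S x = endRows b S y :=
  filter_congr fun r hr => by rw [h r hr]

lemma loneValue_endRows_true (S : Finset R) (x : R → Fin (p + 1) → Bool) :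
    loneValue (endRows true S x) (lastSign x) =
      -if #(endRows true S x) = 1 then (1 : ℝ) else 0 := by
  rw [loneValue, prod_congr rfl fun r hr => lastSign_of_mem_endRows hr]
  by_cases h : #(endRows true S x) = 1 <;> simp [h]

lemma sum_powerset_loneValue (N : Finset R) (s : R → ℝ) :
    ∑ B ∈ N.powerset, loneValue B s = ∑ r ∈ N, s r := by
  simp only [loneValue]
  rw [← sum_filter, ← powersetCard_eq_filter, powersetCard_one, sum_map]
  simp

lemma expect_rowDeviation_mul :
    (𝔼 a, rowDeviation p a * if a = endRow p true then 0 else 1) = 0 := by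
  have pointwise (a : Fin (p + 1) → Bool) :
      (rowDeviation p a * if a = endRow p true then 0 else 1) =
        (2 ^ (p + 1) - 1) * (if a = endRow p false then 1 else 0) +
          (if a = endRow p true then 1 else 0) - 1 := by
    rw [rowDeviation, ite_forall_castSucc_eq_true]
    by_cases h : a = endRow p true
    · simp [h, endRow_true_ne_endRow_false p]
    · simp [h]
  simp only [pointwise, expect_sub_distrib, expect_add_distrib, ← mul_expect, expect_ite_eq,
    Fintype.expect_const]
  linear_combination two_pow_sub_one_mul_one_sub_missProb (p + 1)

lemma expect_rowDeviation_sq_mul :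
    (𝔼 a, rowDeviation p a ^ 2 * if a = endRow p true then 0 else 1) =
      (2 ^ (p + 1) - 2) * missProb (p + 1) := by
  have pointwise (a : Fin (p + 1) → Bool) :
      (rowDeviation p a ^ 2 * if a = endRow p true then 0 else 1) =
        (2 ^ (p + 1) - 1) * (2 ^ (p + 1) - 3) * (if a = endRow p false then 1 else 0) -
          (if a = endRow p true then 1 else 0) + 1 := by
    rw [rowDeviation, ite_forall_castSucc_eq_true]
    by_cases h : a = endRow p true
    · simp [h, endRow_true_ne_endRow_false p]
    · by_cases h' : a = endRow p false
      · simp only [h', (endRow_true_ne_endRow_false p).symm, if_true, if_false]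
        ring
      · simp [h, h']
  simp only [pointwise, expect_sub_distrib, expect_add_distrib, ← mul_expect, expect_ite_eq,
    Fintype.expect_const]
  linear_combination (2 ^ (p + 1) - 3) * two_pow_sub_one_mul_one_sub_missProb (p + 1)

variable [DecidableEq R]

lemma fullRows_eq_union (S : Finset R) (x : R → Fin (p + 1) → Bool) :
    fullRows S x = endRows true S x ∪ endRows false S x := by
  simp only [fullRows, endRows, forall_castSucc_eq_true_iff, filter_or]

lemma sum_powerset_loneValue_union_sdiff {V N : Finset R} (hVN : Disjoint V N) (s : R → ℝ) :
    ∑ W ∈ N.powerset, loneValue (V ∪ N \ W) s = 0 ^ #V * ∑ r ∈ N, s r + loneValue V s := by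
  rw [sum_powerset_comp_sdiff N fun B => loneValue (V ∪ B) s, sum_congr rfl fun B hB =>
    loneValue_union (hVN.mono_right (mem_powerset.1 hB)) s, sum_add_distrib, ← mul_sum, ← mul_sum,
    sum_powerset_loneValue, sum_powerset_zero_pow_card, mul_one]

lemma sum_powerset_blockSign_sdiff (S : Finset R) (x : R → Fin (p + 1) → Bool) :
    ∑ W ∈ S.powerset, (∏ r ∈ W, if x r = endRow p false then 1 else 0) * blockSign (S \ W) x =
      0 ^ #(endRows true S x) * #(fullRows S x) - if #(endRows true S x) = 1 then 1 else 0 := by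
  set V := endRows true S x
  set N := endRows false S x with hN
  have hVN : Disjoint V N := disjoint_endRows S x
  have hsubsets : {W ∈ S.powerset | ∀ r ∈ W, x r = endRow p false} = N.powerset := by
    ext W
    simp only [hN, endRows, mem_filter, mem_powerset, subset_iff]
    grind
  have hblock (W) (hW : W ∈ N.powerset) :
      blockSign (S \ W) x = loneValue (V ∪ N \ W) (lastSign x) := by
    have hfull : fullRows (S \ W) x = fullRows S x \ W := by
      ext r
      simp only [fullRows, mem_filter, mem_sdiff]
      tauto
    rw [blockSign, hfull, fullRows_eq_union, union_sdiff_distrib,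
      sdiff_eq_self_of_disjoint (hVN.mono_right (mem_powerset.1 hW))]
  have hcard : (0 : ℝ) ^ #V * #(fullRows S x) = 0 ^ #V * #N := by
    rw [fullRows_eq_union, card_union_of_disjoint hVN]
    rcases V.eq_empty_or_nonempty with h | h
    · simp [h]
    · simp [h.ne_empty]
  simp only [prod_ite_zero, prod_const_one, ite_mul, one_mul, zero_mul]
  rw [← sum_filter, hsubsets, sum_congr rfl hblock, sum_powerset_loneValue_union_sdiff hVN,
    sum_congr rfl fun r hr => lastSign_of_mem_endRows hr, loneValue_endRows_true, hcard]
  simp only [Bool.false_eq_true, ↓reduceIte, sum_const, nsmul_eq_mul, mul_one]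
  ring

lemma disjDensity_eq {S : Finset R} (hS : S.Nonempty) (x : R → Fin (p + 1) → Bool) :
    disjDensity S x = (2 * #S * missProb (p + 1) ^ #S)⁻¹ *
      (((2 ^ (p + 1) - 1) * #(fullRows S x) - #S) * 0 ^ #(endRows true S x) -
        (2 ^ (p + 1) - 1) * ∑ W ∈ S.powerset,
          (∏ r ∈ W, if x r = endRow p false then 1 else 0) * blockSign (S \ W) x) := by
  have hM : (0 : ℝ) < 2 ^ (p + 1) - 1 := sub_pos.2 (one_lt_pow₀ one_lt_two p.succ_ne_zero)
  have hr : 0 < 1 - missProb (p + 1) := sub_pos.2 (missProb_lt_one _)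
  have hQ := two_pow_sub_one_mul_one_sub_missProb (p + 1)
  have hQ_pos : 0 < missProb (p + 1) := hQ ▸ mul_pos hM hr
  have hratio : 1 / (#S * (1 - missProb (p + 1)) * missProb (p + 1) ^ (#S - 1)) =
      (2 ^ (p + 1) - 1) / (#S * missProb (p + 1) ^ #S) := by
    rw [← mul_pow_sub_one hS.card_pos.ne', div_eq_div_iff (by positivity) (by positivity)]
    linear_combination (-#S * missProb (p + 1) ^ (#S - 1)) * hQ
  rw [sum_powerset_blockSign_sdiff, disjDensity, div_eq_mul_one_div (ite _ _ _), hratio]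
  field_simp
  ring

lemma sum_powerset_mul_blockBound_le (S : Finset R) :
    (2 ^ (p + 1) - 1) * ∑ W ∈ S.powerset, (1 - missProb (p + 1)) ^ #W * blockBound p (S \ W) ≤
      missProb (p + 1) ^ #S * √(#S * ((2 ^ (p + 1) - 1) * (2 ^ (p + 1) - 2))) := by
  have hM : (0 : ℝ) ≤ 2 ^ (p + 1) - 2 := sub_nonneg.2 (le_self_pow₀ one_le_two p.succ_ne_zero)
  have hM' : (0 : ℝ) ≤ 2 ^ (p + 1) - 1 := hM.trans (by linarith)
  have hQ := missProb_nonneg (p + 1)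
  have complement : ∑ W ∈ S.powerset, (1 - missProb (p + 1)) ^ #W * blockBound p (S \ W) =
      ∑ B ∈ S.powerset, √(#B) * (missProb p ^ #B * (1 - missProb (p + 1)) ^ (#S - #B)) := by
    rw [← sum_powerset_comp_sdiff]
    refine sum_congr rfl fun W hW => ?_
    rw [card_sdiff_of_subset (mem_powerset.1 hW),
      Finset.sdiff_sdiff_eq_self (mem_powerset.1 hW), blockBound]
    ring
  have cauchy := sq_sum_powerset_sqrt_card_le S (missProb_nonneg p)
    (sub_nonneg.2 (missProb_lt_one (p + 1)).le)
  rw [show missProb p + (1 - missProb (p + 1)) = missProb (p + 1) by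
    rw [missProb_succ]; ring] at cauchy
  have hMq : (2 ^ (p + 1) - 1) * missProb p = (2 ^ (p + 1) - 2) * missProb (p + 1) := by
    linear_combination -two_pow_sub_one_mul_one_sub_missProb (p + 1) -
      2 * (2 ^ (p + 1) - 1) * missProb_succ p
  refine le_of_sq_le_sq ?_ (by positivity)
  rw [complement, mul_pow, mul_pow, Real.sq_sqrt (by positivity)]
  refine (mul_le_mul_of_nonneg_left cauchy (sq_nonneg _)).trans_eq ?_
  linear_combination
    ((2 ^ (p + 1) - 1) * missProb (p + 1) ^ #S * #S * missProb (p + 1) ^ (#S - 1)) * hMq +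
    ((2 ^ (p + 1) - 1) * (2 ^ (p + 1) - 2) * missProb (p + 1) ^ #S) *
      card_mul_missProb_pow (p := p + 1) S

variable [Fintype R]

lemma expect_zero_pow_card_endRows (b : Bool) (S : Finset R) :
    𝔼 x : R → Fin (p + 1) → Bool, (0 : ℝ) ^ #(endRows b S x) = missProb (p + 1) ^ #S := by
  refine (expect_pow_card_filter S (fun a => a = endRow p b) 0).trans ?_
  rw [expect_ite, expect_ite_eq]
  ring

lemma expect_card_endRows_eq_one (b : Bool) (S : Finset R) :
    (𝔼 x : R → Fin (p + 1) → Bool, if #(endRows b S x) = 1 then (1 : ℝ) else 0) =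
      #S * (1 - missProb (p + 1)) * missProb (p + 1) ^ (#S - 1) := by
  refine (expect_card_filter_eq_one S fun a => a = endRow p b).trans ?_
  rw [expect_ite _ 0, expect_ite_eq]
  ring

lemma expect_sq_card_fullRows_mul_zero_pow (S : Finset R) :
    𝔼 x : R → Fin (p + 1) → Bool,
        ((2 ^ (p + 1) - 1) * #(fullRows S x) - #S : ℝ) ^ 2 * 0 ^ #(endRows true S x) =
      #S * (2 ^ (p + 1) - 2) * missProb (p + 1) ^ #S := by
  have hsum (x : R → Fin (p + 1) → Bool) :
      ((2 ^ (p + 1) - 1) * #(fullRows S x) - #S : ℝ) = ∑ r ∈ S, rowDeviation p (x r) := by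
    simp only [rowDeviation, fullRows, sum_sub_distrib, ← mul_sum, sum_boole, sum_const,
      nsmul_eq_mul, mul_one]
  have hprod (x : R → Fin (p + 1) → Bool) :
      (0 : ℝ) ^ #(endRows true S x) = ∏ r ∈ S, if x r = endRow p true then 0 else 1 :=
    pow_card_filter_eq_prod S _ 0
  simp only [hsum, hprod]
  rw [expect_sq_sum_mul_prod S (rowDeviation p) (fun a => if a = endRow p true then 0 else 1)
    expect_rowDeviation_mul, expect_rowDeviation_sq_mul, expect_ite, expect_ite_eq,
    show 1 + (0 - 1) * (1 - missProb (p + 1)) = missProb (p + 1) by ring]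
  linear_combination (2 ^ (p + 1) - 2) * card_mul_missProb_pow (p := p + 1) S

lemma expect_abs_card_fullRows_mul_zero_pow_le (S : Finset R) :
    𝔼 x : R → Fin (p + 1) → Bool,
        |((2 ^ (p + 1) - 1) * #(fullRows S x) - #S : ℝ) * 0 ^ #(endRows true S x)| ≤
      missProb (p + 1) ^ #S * √(#S * (2 ^ (p + 1) - 2)) := by
  have hM : (0 : ℝ) ≤ 2 ^ (p + 1) - 2 := sub_nonneg.2 (le_self_pow₀ one_le_two p.succ_ne_zero)
  have hQ := missProb_nonneg (p + 1)
  refine le_of_sq_le_sq ?_ (by positivity)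
  calc _ ≤ (𝔼 x : R → Fin (p + 1) → Bool, (0 : ℝ) ^ #(endRows true S x)) *
        𝔼 x : R → Fin (p + 1) → Bool,
          ((2 ^ (p + 1) - 1) * #(fullRows S x) - #S : ℝ) ^ 2 * 0 ^ #(endRows true S x) :=
        expect_sq_le_expect_mul_expect (fun x => by positivity) (fun x => by positivity)
          fun x => by rw [sq_abs]; exact le_of_eq (by ring)
    _ = (missProb (p + 1) ^ #S * √(#S * (2 ^ (p + 1) - 2))) ^ 2 := by
        rw [expect_zero_pow_card_endRows, expect_sq_card_fullRows_mul_zero_pow, mul_pow,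
          Real.sq_sqrt (by positivity)]
        ring

lemma isMultiplier_prod_ite_eq_endRow (b : Bool) (W : Finset R) :
    IsMultiplier W (fun x => ∏ r ∈ W, if x r = endRow p b then 1 else 0)
      ((1 - missProb (p + 1)) ^ #W) := by
  have h := isMultiplier_of_dependsOn (S := W)
    (w := fun x : R → Fin (p + 1) → Bool => ∏ r ∈ W, if x r = endRow p b then (1 : ℝ) else 0)
    fun x y h => prod_congr rfl fun r hr => by rw [h r hr]
  simp only [abs_prod, apply_ite abs, abs_one, abs_zero] at h
  rwa [expect_prod_eval W fun _ a => if a = endRow p b then (1 : ℝ) else 0, expect_ite_eq,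
    prod_const] at h

lemma isMultiplier_disjDensity {S : Finset R} (hS : S.Nonempty) :
    IsMultiplier S (disjDensity (p := p) S)
      ((√(2 ^ (p + 1) - 1) + 1) * √(2 ^ (p + 1) - 2) / (2 * √(#S))) := by
  have hM : (0 : ℝ) ≤ 2 ^ (p + 1) - 2 := sub_nonneg.2 (le_self_pow₀ one_le_two p.succ_ne_zero)
  have hM' : (0 : ℝ) ≤ 2 ^ (p + 1) - 1 := hM.trans (by linarith)
  have hn : (0 : ℝ) < #S := Nat.cast_pos.2 hS.card_pos
  have hQ : 0 < missProb (p + 1) := by rw [missProb_succ]; linarith [missProb_nonneg p]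
  have hconstant : IsMultiplier S _ _ := isMultiplier_of_dependsOn
    (w := fun x : R → Fin (p + 1) → Bool =>
      ((2 ^ (p + 1) - 1) * #(fullRows S x) - #S : ℝ) * 0 ^ #(endRows true S x))
    fun x y h => by simp only [fullRows_congr h, endRows_congr h]
  have hsigns : IsMultiplier S _ _ := isMultiplier_sum S.powerset fun W hW =>
    ((isMultiplier_prod_ite_eq_endRow (p := p) false W).mul (isMultiplier_blockSign (S \ W))
      disjoint_sdiff).mono (union_sdiff_of_subset (mem_powerset.1 hW)).subset le_rfl
  have h := (hconstant.add (hsigns.const_mul (-(2 ^ (p + 1) - 1)))).const_mul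
    (2 * #S * missProb (p + 1) ^ #S)⁻¹
  simp only [neg_mul, ← sub_eq_add_neg] at h
  rw [funext (disjDensity_eq hS)]
  refine h.mono Subset.rfl ?_
  rw [abs_neg, abs_of_nonneg hM', abs_of_pos (by positivity)]
  calc _ ≤ (2 * #S * missProb (p + 1) ^ #S)⁻¹ *
        (missProb (p + 1) ^ #S * √(#S * (2 ^ (p + 1) - 2)) +
          missProb (p + 1) ^ #S * √(#S * ((2 ^ (p + 1) - 1) * (2 ^ (p + 1) - 2)))) :=
        mul_le_mul_of_nonneg_left (add_le_add (expect_abs_card_fullRows_mul_zero_pow_le S)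
          (sum_powerset_mul_blockBound_le S)) (by positivity)
    _ = (√(2 ^ (p + 1) - 1) + 1) * √(2 ^ (p + 1) - 2) / (2 * √(#S)) := by
        rw [Real.sqrt_mul hn.le, Real.sqrt_mul hn.le, Real.sqrt_mul hM']
        nth_rw 1 [← Real.mul_self_sqrt hn.le]
        field_simp
        ring

end Density

section Reduction

variable {R R' : Type*} {p : ℕ}

lemma disjDensity_map (e : R ↪ R') (T : Finset R) (x : R' → Fin (p + 1) → Bool) :
    disjDensity (T.map e) x = disjDensity T (x ∘ e) := by
  have hcard : #(endRows true (T.map e) x) = #(endRows true T (x ∘ e)) := by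
    rw [endRows, filter_map, card_map]
    rfl
  rw [disjDensity, disjDensity, hcard, card_map]

lemma one_div_card_filter {α : Type*} [Fintype α] [Nonempty α] (P : α → Prop) [DecidablePred P] :
    (1 : ℝ) / #{a | P a} = (Fintype.card α : ℝ)⁻¹ / 𝔼 a, if P a then 1 else 0 := by
  rw [Fintype.expect_eq_sum_div_card, sum_boole]
  field_simp

lemma forall_eq_true_iff_eq_endRow (a : Fin (p + 1) → Bool) :
    (∀ j, a j = true) ↔ a = endRow p true := by
  simp only [endRow, funext_iff, Fin.forall_fin_succ', Fin.snoc_castSucc, Fin.snoc_last]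

lemma forall_exists_eq_false_iff {n : ℕ} (X : Fin n → Fin (p + 1) → Bool) :
    (∀ i, ∃ j, X i j = false) ↔ #(endRows true univ X) = 0 := by
  rw [card_eq_zero, endRows, filter_eq_empty_iff]
  refine forall_congr' fun i => ?_
  rw [← forall_eq_true_iff_eq_endRow]
  simp

lemma filter_forall_eq_true {n : ℕ} (X : Fin n → Fin (p + 1) → Bool) :
    ({i | ∀ j, X i j = true} : Finset (Fin n)) = endRows true univ X :=
  filter_congr fun i _ => forall_eq_true_iff_eq_endRow (X i)

lemma sigma0_eq {n : ℕ} (X : Fin n → Fin (p + 1) → Bool) :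
    sigma0 n (p + 1) X = (Fintype.card (Fin n → Fin (p + 1) → Bool) : ℝ)⁻¹ *
      (0 ^ #(endRows true univ X) / missProb (p + 1) ^ n) := by
  rw [sigma0, one_div_card_filter]
  simp only [forall_exists_eq_false_iff, ← zero_pow_eq, expect_zero_pow_card_endRows, card_univ,
    Fintype.card_fin]
  split_ifs with h <;> simp [h, div_eq_mul_inv]

lemma sigma1_eq {n : ℕ} (X : Fin n → Fin (p + 1) → Bool) :
    sigma1 n (p + 1) X = (Fintype.card (Fin n → Fin (p + 1) → Bool) : ℝ)⁻¹ *
      ((if #(endRows true univ X) = 1 then 1 else 0) /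
        (n * (1 - missProb (p + 1)) * missProb (p + 1) ^ (n - 1))) := by
  rw [sigma1, one_div_card_filter]
  simp only [filter_forall_eq_true, expect_card_endRows_eq_one, card_univ, Fintype.card_fin]
  split_ifs <;> simp [div_eq_mul_inv]

lemma sign_mul_sigmaD_eq {n : ℕ} (X : Fin n → Fin (p + 1) → Bool) :
    (if DISJ n (p + 1) X then -1 else 1) * sigmaD n (p + 1) X =
      (Fintype.card (Fin n → Fin (p + 1) → Bool) : ℝ)⁻¹ * disjDensity univ X := by
  have hsign : (if DISJ n (p + 1) X then -1 else 1) * sigmaD n (p + 1) X =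
      (sigma1 n (p + 1) X - sigma0 n (p + 1) X) / 2 := by
    by_cases h : ∀ i, ∃ j, X i j = false
    · have h1 : sigma1 n (p + 1) X = 0 := by
        rw [sigma1_eq, (forall_exists_eq_false_iff X).1 h]
        simp
      simp [DISJ, h, sigmaD, h1, neg_div]
    · have h0 : sigma0 n (p + 1) X = 0 := if_neg h
      simp [DISJ, h, sigmaD, h0]
  rw [hsign, sigma0_eq, sigma1_eq, disjDensity, card_univ, Fintype.card_fin]
  ring

lemma ite_odd_card_filter_eq_prod {ι : Type*} (s : Finset ι) (b : ι → Bool) :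
    (if decide (#{i ∈ s | b i = true} % 2 = 1) then (-1 : ℝ) else 1) =
      ∏ i ∈ s, if b i then -1 else 1 := by
  rw [← pow_card_filter_eq_prod]
  simp only [decide_eq_true_eq]
  split_ifs with h
  · exact (Odd.neg_one_pow (Nat.odd_iff.2 h)).symm
  · exact (Even.neg_one_pow (Nat.not_odd_iff_even.1 (Nat.odd_iff.not.2 h))).symm

lemma sum_xor_disj_eq_expect {m : ℕ} (nn : Fin m → ℕ)
    (χ : (∀ i, Fin (nn i) → Fin (p + 1) → Bool) → ℝ) :
    ∑ X, (if decide (#{i | DISJ (nn i) (p + 1) (X i) = true} % 2 = 1) then (-1 : ℝ) else 1) *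
        (∏ i, sigmaD (nn i) (p + 1) (X i)) * χ X =
      𝔼 x : (Σ i, Fin (nn i)) → Fin (p + 1) → Bool,
        (∏ i, disjDensity (univ.map (Function.Embedding.sigmaMk i)) x) * χ (Sigma.curry x) := by
  have term (X : ∀ i, Fin (nn i) → Fin (p + 1) → Bool) :
      (if decide (#{i | DISJ (nn i) (p + 1) (X i) = true} % 2 = 1) then (-1 : ℝ) else 1) *
          (∏ i, sigmaD (nn i) (p + 1) (X i)) * χ X =
        (Fintype.card (∀ i, Fin (nn i) → Fin (p + 1) → Bool) : ℝ)⁻¹ *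
          ((∏ i, disjDensity univ (X i)) * χ X) := by
    rw [ite_odd_card_filter_eq_prod, ← prod_mul_distrib,
      prod_congr rfl fun i _ => sign_mul_sigmaD_eq (X i), prod_mul_distrib, prod_inv_distrib,
      Fintype.card_pi, Nat.cast_prod, mul_assoc]
  simp only [term, ← mul_sum, disjDensity_map]
  rw [← div_eq_inv_mul, ← Fintype.expect_eq_sum_div_card]
  exact (Fintype.expect_equiv (Equiv.piCurry _) _ _ fun x => rfl).symm

lemma isBoundedCylinder_of_isCylinderT {m k : ℕ} {nn : Fin m → ℕ} {S : Finset (Fin k)}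
    {χ : (∀ i, Fin (nn i) → Fin k → Bool) → ℝ} (hχ : IsCylinderT nn k S χ) :
    IsBoundedCylinder fun x : (Σ i, Fin (nn i)) → Fin k → Bool => χ (Sigma.curry x) := by
  obtain ⟨φ, h01, hinv, hprod⟩ := hχ
  refine ⟨fun j x => if j ∈ S then φ j (Sigma.curry x) else 1, fun j x => ?_, fun j x y h => ?_,
    fun x => ?_⟩ <;> dsimp only
  · split_ifs with hj
    · rcases h01 j hj (Sigma.curry x) with h | h <;> simp [h]
    · exact abs_one.le
  · split_ifs with hj
    · exact hinv j hj _ _ fun i i' j' hj' => h ⟨i, i'⟩ j' hj'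
    · rfl
  · rw [hprod, prod_ite_mem, univ_inter]

end Reduction

end DisjXor

/-- discrepancy of the XOR of `m` independent set disjointness
instances under `⊗ σ_{n_i,k}`. -/
theorem stmt_9 (m k : ℕ) (hm : 0 < m) (hk : 0 < k)
    (nn : Fin m → ℕ) (hnn : ∀ i, 0 < nn i) :
    discT nn k
      (fun X => decide
        ((Finset.univ.filter (fun i : Fin m => DISJ (nn i) k (X i) = true)).card % 2 = 1))
      (fun X => ∏ i, sigmaD (nn i) k (X i)) ≤
      ∏ i : Fin m,
        (Real.sqrt ((2 : ℝ) ^ k - 1) + 1) * Real.sqrt ((2 : ℝ) ^ k - 2) /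
          (2 * Real.sqrt (nn i)) := by
  obtain ⟨p, rfl⟩ := Nat.exists_eq_succ_of_ne_zero hk.ne'
  let rows (i : Fin m) : Finset (Σ i, Fin (nn i)) := univ.map (Function.Embedding.sigmaMk i)
  have rows_nonempty (i : Fin m) : (rows i).Nonempty := ⟨⟨i, 0, hnn i⟩, by simp [rows]⟩
  refine Real.sSup_le ?_ (prod_nonneg fun i _ => by positivity)
  rintro _ ⟨S, χ, hχ, rfl⟩
  have bound := (DisjXor.isMultiplier_prod (pairwiseDisjoint_map_sigmaMk (s := univ)) fun i _ =>
    DisjXor.isMultiplier_disjDensity (rows_nonempty i)).abs_expect_le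
      (DisjXor.cylinderBound_one p) (DisjXor.isBoundedCylinder_of_isCylinderT hχ)
  rw [DisjXor.sum_xor_disj_eq_expect]
  simpa [rows] using bound
end
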